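/- arXiv:2207.08458 — 2 statements merged into one kernel-verified Lean document; each statement's English description precedes it below -/
import Mathlib

section
/- Let S = {f_1,…,f_m} be a C¹ weakly conformal IFS on an open set U ⊆ ℝ^d with attractor K, and assume that dim_H(K) = dim(S), the conformality dimension of S. Then for every x₀ ∈ K and every δ ≥ 1, the Hausdorff dimension of limsup_{i∈Λ*} B(f_i(x₀), |f_i(K)|^δ) equals dim_H(K)/δ. -/
/-!
Write `|w|` for the diameter of the cylinder `f_w(K)`.

*Upper bound.* Cylinders shrink exponentially fast in the length of the word (`exp_decay`), so the
vanishing of the pressure at `s₀` makes `∑_w |w|^q` converge for every `q > s₀`. Covering the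
limsup set by the balls of all long words with `q = δ t` shows that its `t`-dimensional Hausdorff
measure is finite for `t > s₀ / δ` (`upper_bound`).

*Lower bound.* The argument is carried by lower Lipschitz constants (`LowerLip`), which multiply
under concatenation of words. Weak conformality makes `f_w` scale all distances in `K` at
comparable rates, up to a factor subexponential in the length of `w` (`quasi_conf`). Hence the
lower Lipschitz constant of `f_w` is at least about `|w|^(1 + θ)`, for any `θ > 0`
(`lowerLip_diam`), and every sequence of letters has a prefix `w` with `|w| ≤ r` and lower
Lipschitz constant at least `r^(1 + θ)` (`exists_prefix`).

Because `dim_H K = s₀`, for any `e < s₀` some small `r` admits more than `r^(-e)` points of `K`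
at mutual distance `3 r`; cutting their addresses there gives `N > r^(-e)` words whose cylinders are
`r`-separated, with lower Lipschitz constant `l = r^(1 + θ)` (`exists_subsystem`). A Cantor set is
formed by concatenating these words freely and, from time to time, inserting after the current
word `w` a further word following an address of `x₀`, chosen so that the new cylinder lies in
`B(f_w(x₀), |w|^δ)` (`exists_insertion`). Infinitely many insertions put the Cantor set into the
limsup set. An insertion raises the current lower Lipschitz constant `L` to a power close to `δ`;
if it is made exactly when the inequality `N^(-n) ≤ L^t` survives, then for `δ t < s₀` it is still
made infinitely often (`exists_scales`). That inequality says that reading the digits of a point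
of the Cantor set in base `N` is a `t`-Hölder map onto `[0, 1]`, so the dimension is at least `t`
(`le_dimH_range`, `lower_bound`).
-/

open Filter Metric Set MeasureTheory Topology ENNReal NNReal

noncomputable section

/-- ℝ^d with the sup norm. -/
abbrev Euc (d : ℕ) : Type := Fin d → ℝ

/-- A `C¹` iterated function system on `ℝ^d`: `m` maps, each sending a compact set `X`
into itself, each a `C¹` diffeomorphism on an open set `U ⊇ X`, with
`sup_{x ∈ X} ‖f_i'(x)‖ < 1`. -/
structure C1IFS (d m : ℕ) where
  f : Fin m → Euc d → Euc d
  f' : Fin m → Euc d → (Euc d →L[ℝ] Euc d)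
  X : Set (Euc d)
  U : Set (Euc d)
  compactX : IsCompact X
  nonemptyX : X.Nonempty
  openU : IsOpen U
  subXU : X ⊆ U
  mapsX : ∀ i, Set.MapsTo (f i) X X
  hasDeriv : ∀ i, ∀ x ∈ U, HasFDerivAt (f i) (f' i x) x
  derivCont : ∀ i, ContinuousOn (f' i) U
  injOnU : ∀ i, Set.InjOn (f i) U
  derivBij : ∀ i, ∀ x ∈ U, Function.Bijective (f' i x)
  contract : ∀ i, ∃ c : ℝ, c < 1 ∧ ∀ x ∈ X, ‖f' i x‖ ≤ c

namespace C1IFS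

variable {d m : ℕ}

/-- For a word `w = [i₁, …, i_k]`, the composition `f_{i₁} ∘ ⋯ ∘ f_{i_k}`. -/
def wmap (S : C1IFS d m) : List (Fin m) → Euc d → Euc d
  | [] => id
  | i :: w => S.f i ∘ S.wmap w

/-- Derivative of `wmap w` at `x` (chain rule). -/
def wderiv (S : C1IFS d m) : List (Fin m) → Euc d → (Euc d →L[ℝ] Euc d)
  | [], _ => ContinuousLinearMap.id ℝ (Euc d)
  | i :: w, x => (S.f' i (S.wmap w x)).comp (S.wderiv w x)

end C1IFS

/-- `K` is the attractor of `S`: nonempty compact with `K = ⋃ i, f_i(K)`. -/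
def IsAttractor {d m : ℕ} (S : C1IFS d m) (K : Set (Euc d)) : Prop :=
  IsCompact K ∧ K.Nonempty ∧ K ⊆ S.X ∧ K = ⋃ i, S.f i '' K

/-- The word made of the first `k` letters of the sequence `x`. -/
def wpre {m : ℕ} (x : ℕ → Fin m) (k : ℕ) : List (Fin m) :=
  List.ofFn fun j : Fin k => x j

/-- The shift `σ^k`. -/
def shiftSeq {m : ℕ} (x : ℕ → Fin m) (k : ℕ) : ℕ → Fin m := fun n => x (n + k)

/-- `m(A) = inf_{‖v‖ = 1} ‖A v‖`. -/
def opMinNorm {d : ℕ} (A : Euc d →L[ℝ] Euc d) : ℝ :=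
  sInf {r : ℝ | ∃ v : Euc d, ‖v‖ = 1 ∧ r = ‖A v‖}

/-- `S` is weakly conformal, with coding map `proj`:
`proj x = lim_k f_{x₁} ∘ ⋯ ∘ f_{x_k} (z)` for every `z ∈ K`, and
`sup_x (1/k) (log ‖f'_{(x₁…x_k)}(proj (σ^k x))‖ - log m(f'_{(x₁…x_k)}(proj (σ^k x)))) → 0`. -/
def WeaklyConformalWith {d m : ℕ} (S : C1IFS d m) (K : Set (Euc d))
    (proj : (ℕ → Fin m) → Euc d) : Prop :=
  (∀ x, proj x ∈ K) ∧
  (∀ x, ∀ z ∈ K, Tendsto (fun k => S.wmap (wpre x k) z) atTop (𝓝 (proj x))) ∧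
  Tendsto
    (fun k : ℕ =>
      ⨆ x : ℕ → Fin m,
        (Real.log ‖S.wderiv (wpre x k) (proj (shiftSeq x k))‖ -
            Real.log (opMinNorm (S.wderiv (wpre x k) (proj (shiftSeq x k))))) / k)
    atTop (𝓝 0)

/-- `S` is weakly conformal. -/
def IsWeaklyConformal {d m : ℕ} (S : C1IFS d m) (K : Set (Euc d)) : Prop :=
  ∃ proj, WeaklyConformalWith S K proj

/-- `limsup` of sets indexed by finite words: points belonging to `E w` for words `w`
of arbitrarily large length. -/
def limsupWords {m : ℕ} {α : Type*} (E : List (Fin m) → Set α) : Set α :=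
  ⋂ k : ℕ, ⋃ (w : List (Fin m)) (_ : k ≤ w.length), E w

/-- `limsup` of a sequence of sets. -/
def limsupSets {α : Type*} (A : ℕ → Set α) : Set α :=
  ⋂ k : ℕ, ⋃ (n : ℕ) (_ : k ≤ n), A n

/-- The pressure of `S` at `s` is `P`:
`(1/k) log Σ_{w ∈ Λ^k} |f_w(K)|^s → P`. -/
def HasPressure {d m : ℕ} (S : C1IFS d m) (K : Set (Euc d)) (s P : ℝ) : Prop :=
  Tendsto
    (fun k : ℕ =>
      Real.log (∑ w : Fin k → Fin m, diam (S.wmap (List.ofFn w) '' K) ^ s) / k)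
    atTop (𝓝 P)

/-- `s`-dimensional Hausdorff content (coverings by closed balls, no scale restriction). -/
def hContent {d : ℕ} (s : ℝ) (E : Set (Euc d)) : ℝ≥0∞ :=
  ⨅ (t : ℕ → Set (Euc d)) (_ : E ⊆ ⋃ n, t n)
    (_ : ∀ n, ∃ x r, t n = closedBall x r),
    ∑' n, ENNReal.ofReal (diam (t n)) ^ s

/-- The `μ`-essential `s`-dimensional Hausdorff content of `A`. -/
def essContent {d : ℕ} (μ : Measure (Euc d)) (s : ℝ) (A : Set (Euc d)) : ℝ≥0∞ :=
  ⨅ (E : Set (Euc d)) (_ : E ⊆ A) (_ : MeasurableSet E) (_ : μ E = μ A),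
    hContent s E

/-- `μ` is the weakly conformal measure for `S` and the positive probability vector `p`. -/
def IsWeaklyConformalMeasure {d m : ℕ} (S : C1IFS d m) (p : Fin m → ℝ)
    (μ : Measure (Euc d)) : Prop :=
  (∀ i, 0 < p i) ∧ (∑ i, p i = 1) ∧ IsProbabilityMeasure μ ∧
    μ = ∑ i, ENNReal.ofReal (p i) • μ.map (S.f i)

/-- `μ` is exact dimensional with dimension `α`. -/
def ExactDim {d : ℕ} (μ : Measure (Euc d)) (α : ℝ) : Prop :=
  ∀ᵐ x ∂μ, Tendsto (fun r : ℝ => Real.log (μ (closedBall x r)).toReal / Real.log r)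
    (𝓝[>] 0) (𝓝 α)

/-- The sequence of balls `B` is `μ`-asymptotically covering. -/
def MuAC {d : ℕ} (μ : Measure (Euc d)) (B : ℕ → Set (Euc d)) : Prop :=
  ∃ C : ℝ≥0∞, 0 < C ∧ ∀ Ω : Set (Euc d), IsOpen Ω → ∀ g : ℕ,
    ∃ F : Finset ℕ, (∀ n ∈ F, g ≤ n) ∧ (∀ n ∈ F, B n ⊆ Ω) ∧
      ((F : Set ℕ).Pairwise fun a b => Disjoint (B a) (B b)) ∧
      C * μ Ω ≤ μ (⋃ n ∈ F, B n)

/-- A gauge function: vanishing at `0`, nonnegative, increasing near `0`. -/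
def IsGauge (ζ : ℝ → ℝ) : Prop :=
  (∀ t, 0 ≤ ζ t) ∧ ζ 0 = 0 ∧ ∃ η > 0, StrictMonoOn ζ (Icc 0 η)

/-- Hausdorff pre-measure at scale `t` associated with a gauge `ζ`. -/
def gaugeContentAt {d : ℕ} (ζ : ℝ → ℝ) (t : ℝ) (E : Set (Euc d)) : ℝ≥0∞ :=
  ⨅ (c : ℕ → Set (Euc d)) (_ : E ⊆ ⋃ n, c n)
    (_ : ∀ n, (∃ x r, c n = closedBall x r) ∧ diam (c n) ≤ t),
    ∑' n, ENNReal.ofReal (ζ (diam (c n)))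

/-- The Hausdorff measure associated with the gauge `ζ`. -/
def gaugeMeasure {d : ℕ} (ζ : ℝ → ℝ) (E : Set (Euc d)) : ℝ≥0∞ :=
  ⨆ (t : ℝ) (_ : 0 < t), gaugeContentAt ζ t E

/-- The cylinder of sequences beginning with the word `w`. -/
def cylinder {m : ℕ} (w : List (Fin m)) : Set (ℕ → Fin m) :=
  {x | wpre x w.length = w}

/-- The generation-`k` cut `Λ^{(k)}`. -/
def lamCut {d m : ℕ} (S : C1IFS d m) (K : Set (Euc d)) (k : ℕ) : Set (List (Fin m)) :=
  {w | w ≠ [] ∧ diam (S.wmap w '' K) ≤ ((2 : ℝ) ^ k)⁻¹ ∧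
    ((2 : ℝ) ^ k)⁻¹ < diam (S.wmap w.dropLast '' K)}

/-- The asymptotically weak separation condition:
`t_k = max_x #{f_w : w ∈ Λ^{(k)}, f_w(K) ∩ B(x, 2^{-k}) ≠ ∅}` satisfies `(log t_k)/k → 0`. -/
def AWSC {d m : ℕ} (S : C1IFS d m) (K : Set (Euc d)) : Prop :=
  ∃ t : ℕ → ℕ,
    (∀ k : ℕ, ∀ x : Euc d,
      Set.ncard {g : Euc d → Euc d | ∃ w ∈ lamCut S K k, S.wmap w = g ∧
        (S.wmap w '' K ∩ closedBall x (((2 : ℝ) ^ k)⁻¹)).Nonempty} ≤ t k) ∧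
    Tendsto (fun k : ℕ => Real.log (t k) / k) atTop (𝓝 0)

/-- `S` has no exact overlaps. -/
def NoExactOverlaps {d m : ℕ} (S : C1IFS d m) : Prop :=
  ∀ w w' : List (Fin m), w.length = w'.length → w ≠ w' → S.wmap w ≠ S.wmap w'

/-- A self-similar IFS on `ℝ^d` with contraction ratios `c i ∈ (0,1)`. -/
structure SelfSimIFS (d m : ℕ) where
  f : Fin m → Euc d → Euc d
  c : Fin m → ℝ
  c_pos : ∀ i, 0 < c i
  c_lt_one : ∀ i, c i < 1
  sim : ∀ i x y, dist (f i x) (f i y) = c i * dist x y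

namespace SelfSimIFS

variable {d m : ℕ}

/-- For a word `w = [i₁, …, i_k]`, the composition `f_{i₁} ∘ ⋯ ∘ f_{i_k}`. -/
def wmap (S : SelfSimIFS d m) : List (Fin m) → Euc d → Euc d
  | [] => id
  | i :: w => S.f i ∘ S.wmap w

/-- `K` is the attractor of the self-similar IFS `S`. -/
def IsAttractor (S : SelfSimIFS d m) (K : Set (Euc d)) : Prop :=
  IsCompact K ∧ K.Nonempty ∧ K = ⋃ i, S.f i '' K

end SelfSimIFS

/-! ### Words, cylinders and derivatives -/

section Basics

variable {d m : ℕ} {S : C1IFS d m} {K : Set (Euc d)}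

lemma wmap_append (S : C1IFS d m) (u v : List (Fin m)) (x : Euc d) :
    S.wmap (u ++ v) x = S.wmap u (S.wmap v x) := by
  induction u with
  | nil => rfl
  | cons i u ih => simp [C1IFS.wmap, ih]

lemma wmap_mem (hK : IsAttractor S K) (w : List (Fin m)) {z : Euc d} (hz : z ∈ K) :
    S.wmap w z ∈ K := by
  induction w with
  | nil => exact hz
  | cons i w ih =>
    have : S.f i (S.wmap w z) ∈ ⋃ i, S.f i '' K := mem_iUnion.2 ⟨i, _, ih, rfl⟩
    rw [← hK.2.2.2] at this
    exact this

lemma mem_U (hK : IsAttractor S K) {z : Euc d} (hz : z ∈ K) : z ∈ S.U :=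
  S.subXU (hK.2.2.1 hz)

lemma wmap_injOn (hK : IsAttractor S K) (w : List (Fin m)) : InjOn (S.wmap w) K := by
  induction w with
  | nil => exact fun x _ y _ h => h
  | cons i w ih =>
    intro x hx y hy h
    exact ih hx hy (S.injOnU i (mem_U hK (wmap_mem hK w hx)) (mem_U hK (wmap_mem hK w hy)) h)

lemma f_strict (S : C1IFS d m) (i : Fin m) {z : Euc d} (hz : z ∈ S.U) :
    HasStrictFDerivAt (S.f i) (S.f' i z) z :=
  hasStrictFDerivAt_of_hasFDerivAt_of_continuousAt
    ((S.openU.eventually_mem hz).mono fun y hy => S.hasDeriv i y hy)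
    ((S.derivCont i).continuousAt (S.openU.mem_nhds hz))

lemma wmap_strict (hK : IsAttractor S K) (w : List (Fin m)) {z : Euc d} (hz : z ∈ K) :
    HasStrictFDerivAt (S.wmap w) (S.wderiv w z) z := by
  induction w with
  | nil => exact hasStrictFDerivAt_id z
  | cons i w ih => exact (f_strict S i (mem_U hK (wmap_mem hK w hz))).comp z ih

lemma wmap_continuousOn (hK : IsAttractor S K) (w : List (Fin m)) : ContinuousOn (S.wmap w) K :=
  fun _ hz => (wmap_strict hK w hz).continuousAt.continuousWithinAt

lemma wderiv_bij (hK : IsAttractor S K) (w : List (Fin m)) {z : Euc d} (hz : z ∈ K) :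
    Function.Bijective (S.wderiv w z) := by
  induction w with
  | nil => exact Function.bijective_id
  | cons i w ih => exact (S.derivBij i _ (mem_U hK (wmap_mem hK w hz))).comp ih

lemma wderiv_continuousOn (hK : IsAttractor S K) (w : List (Fin m)) :
    ContinuousOn (S.wderiv w) K := by
  induction w with
  | nil => exact continuousOn_const
  | cons i w ih =>
    refine ContinuousOn.clm_comp ?_ ih
    exact (S.derivCont i).comp (wmap_continuousOn hK w) fun z hz => mem_U hK (wmap_mem hK w hz)

lemma isCompact_cyl (hK : IsAttractor S K) (w : List (Fin m)) : IsCompact (S.wmap w '' K) :=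
  hK.1.image_of_continuousOn (wmap_continuousOn hK w)

lemma dist_le_cyl (hK : IsAttractor S K) (w : List (Fin m)) {x y : Euc d} (hx : x ∈ K)
    (hy : y ∈ K) : dist (S.wmap w x) (S.wmap w y) ≤ diam (S.wmap w '' K) :=
  dist_le_diam_of_mem (isCompact_cyl hK w).isBounded (mem_image_of_mem _ hx)
    (mem_image_of_mem _ hy)

lemma cyl_subset (hK : IsAttractor S K) (u v : List (Fin m)) :
    S.wmap (u ++ v) '' K ⊆ S.wmap u '' K := by
  rintro _ ⟨z, hz, rfl⟩
  exact ⟨S.wmap v z, wmap_mem hK v hz, (wmap_append S u v z).symm⟩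

lemma diam_cyl_le (hK : IsAttractor S K) (u v : List (Fin m)) :
    diam (S.wmap (u ++ v) '' K) ≤ diam (S.wmap u '' K) :=
  diam_mono (cyl_subset hK u v) (isCompact_cyl hK u).isBounded

lemma wpre_length (x : ℕ → Fin m) (k : ℕ) : (wpre x k).length = k := by simp [wpre]

lemma wpre_add (x : ℕ → Fin m) (k l : ℕ) :
    wpre x (k + l) = wpre x k ++ wpre (shiftSeq x k) l := by
  simp only [wpre, shiftSeq, List.ofFn_add]
  simp [add_comm]

lemma wpre_succ (x : ℕ → Fin m) (k : ℕ) : wpre x (k + 1) = wpre x k ++ [x k] := by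
  rw [wpre_add]
  simp [wpre, shiftSeq]

/-- The sequence obtained by writing the word `w` in front of `y`. -/
def catSeq (w : List (Fin m)) (y : ℕ → Fin m) : ℕ → Fin m :=
  fun n => if h : n < w.length then w[n] else y (n - w.length)

lemma shift_catSeq (w : List (Fin m)) (y : ℕ → Fin m) :
    shiftSeq (catSeq w y) w.length = y := by
  funext n
  simp [shiftSeq, catSeq]

lemma wpre_catSeq (w : List (Fin m)) (y : ℕ → Fin m) : wpre (catSeq w y) w.length = w := by
  apply List.ext_getElem
  · simp [wpre]
  · intro n h1 h2
    simp [wpre, catSeq]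

lemma wpre_catSeq_add (w : List (Fin m)) (y : ℕ → Fin m) (l : ℕ) :
    wpre (catSeq w y) (w.length + l) = w ++ wpre y l := by
  rw [wpre_add, shift_catSeq, wpre_catSeq]

/-- Every point of the attractor has an address. -/
lemma exists_address (hK : IsAttractor S K) {z : Euc d} (hz : z ∈ K) :
    ∃ y : ℕ → Fin m, ∀ k, z ∈ S.wmap (wpre y k) '' K := by
  have step : ∀ p : K, ∃ q : Fin m × K, S.f q.1 q.2 = p := by
    rintro ⟨p, hp⟩
    have hp' := hp
    rw [hK.2.2.2] at hp'
    obtain ⟨i, q, hq, h⟩ := mem_iUnion.1 hp'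
    exact ⟨(i, ⟨q, hq⟩), h⟩
  choose g hg using step
  let it : ℕ → K := fun n => Nat.rec (motive := fun _ => K) ⟨z, hz⟩ (fun _ p => (g p).2) n
  refine ⟨fun n => (g (it n)).1, fun k => ⟨it k, (it k).2, ?_⟩⟩
  induction k with
  | zero => rfl
  | succ k ih =>
    rw [wpre_succ, wmap_append]
    have : S.wmap [(g (it k)).1] (it (k + 1)) = it k := hg (it k)
    rw [this, ih]

/-! ### Local estimates from the derivative -/

lemma opMinNorm_bddBelow (A : Euc d →L[ℝ] Euc d) :
    BddBelow {r : ℝ | ∃ v : Euc d, ‖v‖ = 1 ∧ r = ‖A v‖} :=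
  ⟨0, by rintro _ ⟨v, _, rfl⟩; exact norm_nonneg _⟩

lemma exists_norm_one (hd : 1 ≤ d) : ∃ v : Euc d, ‖v‖ = 1 := by
  have : Nonempty (Fin d) := ⟨⟨0, hd⟩⟩
  exact ⟨fun _ => 1, by simp⟩

lemma opMinNorm_mul_le (A : Euc d →L[ℝ] Euc d) (v : Euc d) : opMinNorm A * ‖v‖ ≤ ‖A v‖ := by
  by_cases hv : v = 0
  · simp [hv]
  have hv' : 0 < ‖v‖ := norm_pos_iff.2 hv
  have h : opMinNorm A ≤ ‖A (‖v‖⁻¹ • v)‖ :=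
    csInf_le (opMinNorm_bddBelow A) ⟨_, by rw [norm_smul, norm_inv, norm_norm,
      inv_mul_cancel₀ hv'.ne'], rfl⟩
  rw [map_smul, norm_smul, norm_inv, norm_norm, inv_mul_eq_div, le_div_iff₀ hv'] at h
  exact h

lemma opMinNorm_pos (hd : 1 ≤ d) {A : Euc d →L[ℝ] Euc d} (hA : Function.Injective A) :
    0 < opMinNorm A := by
  obtain ⟨C, hC, h⟩ := LinearMap.exists_antilipschitzWith (A : Euc d →ₗ[ℝ] Euc d)
    (LinearMap.ker_eq_bot.2 hA)
  have hC' : (0 : ℝ) < C := hC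
  refine lt_of_lt_of_le (inv_pos.2 hC') (le_csInf ?_ ?_)
  · obtain ⟨v, hv⟩ := exists_norm_one hd
    exact ⟨_, v, hv, rfl⟩
  · rintro _ ⟨v, hv, rfl⟩
    have := h.le_mul_dist v 0
    simp only [dist_zero_right, map_zero, hv, ContinuousLinearMap.coe_coe] at this
    rw [inv_le_iff_one_le_mul₀ hC']
    linarith

lemma opMinNorm_le_add (hd : 1 ≤ d) (A B : Euc d →L[ℝ] Euc d) :
    opMinNorm A ≤ opMinNorm B + ‖A - B‖ := by
  rw [← sub_le_iff_le_add]
  refine le_csInf ?_ ?_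
  · obtain ⟨v, hv⟩ := exists_norm_one hd
    exact ⟨_, v, hv, rfl⟩
  · rintro _ ⟨v, hv, rfl⟩
    have h1 : opMinNorm A ≤ ‖A v‖ := csInf_le (opMinNorm_bddBelow A) ⟨v, hv, rfl⟩
    have h2 : ‖A v‖ ≤ ‖B v‖ + ‖(A - B) v‖ := by
      have : A v = B v + (A - B) v := by simp
      rw [this]; exact norm_add_le _ _
    have h3 := (A - B).le_opNorm v
    rw [hv, mul_one] at h3
    linarith

lemma opMinNorm_continuous (hd : 1 ≤ d) :
    Continuous (opMinNorm : (Euc d →L[ℝ] Euc d) → ℝ) := by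
  refine LipschitzWith.continuous (K := 1) (LipschitzWith.of_dist_le_mul fun A B => ?_)
  rw [Real.dist_eq, dist_eq_norm, abs_le]
  have h1 := opMinNorm_le_add hd A B
  have h2 := opMinNorm_le_add hd B A
  rw [norm_sub_rev] at h2
  simp only [NNReal.coe_one, one_mul]
  constructor <;> linarith

/-- Near a point `z ∈ K` the map `f_w` distorts distances by factors between `m(f_w'(z)) / 2`
and `2 ‖f_w'(z)‖`. -/
lemma local_bilip (hd : 1 ≤ d) (hK : IsAttractor S K) (w : List (Fin m)) {z : Euc d}
    (hz : z ∈ K) : ∃ s ∈ 𝓝 z, ∀ x ∈ s, ∀ y ∈ s,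
      opMinNorm (S.wderiv w z) / 2 * dist x y ≤ dist (S.wmap w x) (S.wmap w y) ∧
      dist (S.wmap w x) (S.wmap w y) ≤ 2 * ‖S.wderiv w z‖ * dist x y := by
  set D := S.wderiv w z
  have hm : 0 < opMinNorm D := opMinNorm_pos hd (wderiv_bij hK w hz).1
  have hmD : opMinNorm D ≤ ‖D‖ := by
    obtain ⟨v, hv⟩ := exists_norm_one hd
    have h1 := opMinNorm_mul_le D v
    have h2 := D.le_opNorm v
    rw [hv] at h1 h2
    linarith
  obtain ⟨s, hs, h⟩ := (wmap_strict hK w hz).approximates_deriv_on_nhds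
    (c := (opMinNorm D / 2).toNNReal) (Or.inr (Real.toNNReal_pos.2 (half_pos hm)))
  refine ⟨s, hs, fun x hx y hy => ?_⟩
  have h1 : ‖S.wmap w x - S.wmap w y - D (x - y)‖ ≤ opMinNorm D / 2 * ‖x - y‖ := by
    have := h x hx y hy
    rwa [Real.coe_toNNReal _ (half_pos hm).le] at this
  have h2 := opMinNorm_mul_le D (x - y)
  have h3 := D.le_opNorm (x - y)
  have h4 := norm_sub_norm_le (D (x - y)) (S.wmap w x - S.wmap w y)
  rw [norm_sub_rev (D (x - y))] at h4
  have h5 := norm_sub_norm_le (S.wmap w x - S.wmap w y) (D (x - y))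
  rw [dist_eq_norm, dist_eq_norm]
  have := norm_nonneg (x - y)
  constructor <;> nlinarith

/-- Each `f_w` is bi-Lipschitz from below on `K`. -/
lemma exists_lower_lip (hd : 1 ≤ d) (hK : IsAttractor S K) (w : List (Fin m)) :
    ∃ b > 0, ∀ x ∈ K, ∀ y ∈ K, b * dist x y ≤ dist (S.wmap w x) (S.wmap w y) := by
  suffices h : ∃ b > 0, ∀ p ∈ K ×ˢ K, b * dist p.1 p.2 ≤ dist (S.wmap w p.1) (S.wmap w p.2) by
    obtain ⟨b, hb, h⟩ := h
    exact ⟨b, hb, fun x hx y hy => h (x, y) ⟨hx, hy⟩⟩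
  refine (hK.1.prod hK.1).induction_on (p := fun A : Set (Euc d × Euc d) => ∃ b > 0, ∀ p ∈ A,
    b * dist p.1 p.2 ≤ dist (S.wmap w p.1) (S.wmap w p.2)) ⟨1, one_pos, by simp⟩ ?_ ?_ ?_
  · rintro s t hst ⟨b, hb, h⟩
    exact ⟨b, hb, fun p hp => h p (hst hp)⟩
  · rintro s t ⟨b, hb, h⟩ ⟨b', hb', h'⟩
    refine ⟨min b b', lt_min hb hb', ?_⟩
    rintro p (hp | hp)
    · exact (mul_le_mul_of_nonneg_right (min_le_left _ _) dist_nonneg).trans (h p hp)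
    · exact (mul_le_mul_of_nonneg_right (min_le_right _ _) dist_nonneg).trans (h' p hp)
  · rintro ⟨x, y⟩ ⟨hx, hy⟩
    by_cases hxy : x = y
    · subst hxy
      obtain ⟨s, hs, h⟩ := local_bilip hd hK w hx
      refine ⟨s ×ˢ s, mem_nhdsWithin_of_mem_nhds (prod_mem_nhds hs hs), _,
        half_pos (opMinNorm_pos hd (wderiv_bij hK w hx).1), fun p hp => (h _ hp.1 _ hp.2).1⟩
    · have h0 : 0 < dist (S.wmap w x) (S.wmap w y) :=
        dist_pos.2 fun h => hxy (wmap_injOn hK w hx hy h)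
      have h1 : 0 < dist x y := dist_pos.2 hxy
      have hc : ContinuousAt (fun p : Euc d × Euc d => dist (S.wmap w p.1) (S.wmap w p.2))
          (x, y) :=
        Filter.Tendsto.dist
          ((wmap_strict hK w hx).continuousAt.comp_of_eq continuousAt_fst rfl)
          ((wmap_strict hK w hy).continuousAt.comp_of_eq continuousAt_snd rfl)
      have hc' : ContinuousAt (fun p : Euc d × Euc d => dist p.1 p.2) (x, y) := by fun_prop
      have e1 := hc.eventually (lt_mem_nhds (half_lt_self h0))
      have e2 := hc'.eventually (gt_mem_nhds (lt_two_mul_self h1))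
      refine ⟨_, mem_nhdsWithin_of_mem_nhds (e1.and e2),
        dist (S.wmap w x) (S.wmap w y) / 2 / (2 * dist x y), by positivity, ?_⟩
      rintro p ⟨hp1, hp2⟩
      dsimp only at hp1 hp2
      rw [div_mul_eq_mul_div, div_le_iff₀ (by positivity)]
      exact mul_le_mul hp1.le hp2.le dist_nonneg (by positivity)

/-- A Lebesgue number argument: local properties of neighbourhoods hold at a uniform scale. -/
lemma uniform_scale (hKc : IsCompact K) {Q : Set (Euc d) → Prop}
    (h : ∀ z ∈ K, ∃ s ∈ 𝓝 z, Q s) : ∃ ρ > 0, ∀ x ∈ K, ∃ s, ball x ρ ⊆ s ∧ Q s := by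
  choose! s hs hQ using h
  obtain ⟨ρ, hρ, h⟩ := lebesgue_number_lemma_of_metric (c := fun z : K => interior (s z)) hKc
    (fun _ => isOpen_interior)
    (fun z hz => mem_iUnion.2 ⟨⟨z, hz⟩, mem_interior_iff_mem_nhds.2 (hs z hz)⟩)
  refine ⟨ρ, hρ, fun x hx => ?_⟩
  obtain ⟨i, hi⟩ := h x hx
  exact ⟨s i, hi.trans interior_subset, hQ i i.2⟩

end Basics

/-! ### Contraction and weak conformality -/

section Contraction

variable {d m : ℕ} {S : C1IFS d m} {K : Set (Euc d)} {proj : (ℕ → Fin m) → Euc d}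

/-- Since `X` need not be convex, the maps contract only at small scales. -/
lemma local_contract (hK : IsAttractor S K) : ∃ ρ > 0, ∃ c : ℝ, 0 < c ∧ c < 1 ∧
    ∀ w : List (Fin m), ∀ x ∈ K, ∀ y ∈ K, dist x y < ρ →
      dist (S.wmap w x) (S.wmap w y) ≤ c ^ w.length * dist x y := by
  obtain ⟨c, hc0, hc1, hc⟩ : ∃ c : ℝ, 0 < c ∧ c < 1 ∧ ∀ i, ∀ x ∈ S.X, ‖S.f' i x‖ < c := by
    choose c hc1 hc using S.contract
    obtain ⟨⟨M, hM1⟩, hM⟩ := Finite.exists_le (fun i => (⟨c i, hc1 i⟩ : Iio (1 : ℝ)))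
    have hM1' : M < 1 := hM1
    refine ⟨(max M 0 + 1) / 2, by positivity, ?_, fun i x hx => ?_⟩
    · have := max_lt hM1' zero_lt_one
      linarith
    · have h1 := hc i x hx
      have h2 : c i ≤ M := hM i
      have h3 := max_lt hM1' zero_lt_one
      have h4 := le_max_left M 0
      linarith
  have h1 : ∀ z ∈ K, ∃ s ∈ 𝓝 z, ∀ i, ∀ x ∈ s, ∀ y ∈ s,
      dist (S.f i x) (S.f i y) ≤ c * dist x y := by
    intro z hz
    have h2 : ∀ i, ∃ s ∈ 𝓝 z, LipschitzOnWith c.toNNReal (S.f i) s := fun i =>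
      (f_strict S i (mem_U hK hz)).exists_lipschitzOnWith_of_nnnorm_lt _ (by
        rw [← NNReal.coe_lt_coe, coe_nnnorm, Real.coe_toNNReal _ hc0.le]
        exact hc i z (hK.2.2.1 hz))
    choose s hs hl using h2
    refine ⟨⋂ i, s i, Filter.iInter_mem.2 hs, fun i x hx y hy => ?_⟩
    have := (hl i).dist_le_mul x (mem_iInter.1 hx i) y (mem_iInter.1 hy i)
    rwa [Real.coe_toNNReal _ hc0.le] at this
  obtain ⟨ρ, hρ, h⟩ := uniform_scale hK.1 h1
  refine ⟨ρ, hρ, c, hc0, hc1, fun w x hx y hy hxy => ?_⟩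
  induction w with
  | nil => simp [C1IFS.wmap]
  | cons i w ih =>
    have h3 : dist (S.wmap w x) (S.wmap w y) < ρ :=
      (ih.trans (mul_le_of_le_one_left dist_nonneg (pow_le_one₀ hc0.le hc1.le))).trans_lt hxy
    obtain ⟨s, hs, hl⟩ := h _ (wmap_mem hK w hx)
    have h4 := hl i _ (hs (mem_ball_self hρ)) _ (hs (mem_ball'.2 h3))
    calc dist (S.wmap (i :: w) x) (S.wmap (i :: w) y)
        ≤ c * dist (S.wmap w x) (S.wmap w y) := h4
      _ ≤ c * (c ^ w.length * dist x y) := mul_le_mul_of_nonneg_left ih hc0.le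
      _ = c ^ (i :: w).length * dist x y := by rw [List.length_cons, pow_succ]; ring

/-- Along each sequence of letters the cylinders shrink: pointwise convergence on a finite net
is upgraded by `local_contract`. -/
lemma exists_small_cyl (hK : IsAttractor S K)
    (hcod : ∀ x, ∀ z ∈ K, Tendsto (fun k => S.wmap (wpre x k) z) atTop (𝓝 (proj x)))
    (x : ℕ → Fin m) {η : ℝ} (hη : 0 < η) : ∃ k, diam (S.wmap (wpre x k) '' K) < η := by
  obtain ⟨ρ, hρ, c, hc0, hc1, hc⟩ := local_contract hK
  set r := min ρ (η / 5) with hr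
  have hr0 : 0 < r := lt_min hρ (by positivity)
  obtain ⟨t, htK, htf, ht⟩ := hK.1.finite_cover_balls hr0
  have h1 : ∀ᶠ k in atTop, ∀ z ∈ t, dist (S.wmap (wpre x k) z) (proj x) < η / 5 :=
    (htf.eventually_all).2 fun z hz =>
      (hcod x z (htK hz)).eventually (ball_mem_nhds _ (by positivity))
  obtain ⟨k, hk⟩ := h1.exists
  refine ⟨k, lt_of_le_of_lt (b := 4 * (η / 5)) ?_ (by linarith)⟩
  have h2 : ∀ y ∈ K, dist (S.wmap (wpre x k) y) (proj x) ≤ 2 * (η / 5) := by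
    intro y hy
    obtain ⟨z, hz, hyz⟩ := mem_iUnion₂.1 (ht hy)
    have h3 := hc (wpre x k) y hy z (htK hz) (hyz.trans_le (min_le_left _ _))
    have h4 : dist y z < η / 5 := lt_of_lt_of_le hyz (min_le_right _ _)
    have h5 : c ^ (wpre x k).length * dist y z ≤ dist y z :=
      mul_le_of_le_one_left dist_nonneg (pow_le_one₀ hc0.le hc1.le)
    have h6 := dist_triangle (S.wmap (wpre x k) y) (S.wmap (wpre x k) z) (proj x)
    linarith [hk z hz]
  refine diam_le_of_forall_dist_le (by positivity) ?_
  rintro _ ⟨y, hy, rfl⟩ _ ⟨y', hy', rfl⟩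
  have := dist_triangle_right (S.wmap (wpre x k) y) (S.wmap (wpre x k) y') (proj x)
  linarith [h2 y hy, h2 y' hy']

/-- Cylinders shrink uniformly in the word, by compactness of the space of sequences. -/
lemma uniform_small_cyl (hm : 2 ≤ m) (hK : IsAttractor S K)
    (hcod : ∀ x, ∀ z ∈ K, Tendsto (fun k => S.wmap (wpre x k) z) atTop (𝓝 (proj x)))
    {η : ℝ} (hη : 0 < η) :
    ∃ k, ∀ w : List (Fin m), k ≤ w.length → diam (S.wmap w '' K) < η := by
  by_contra! hcon
  let A : ℕ → Set (ℕ → Fin m) := fun k => {x | η ≤ diam (S.wmap (wpre x k) '' K)}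
  have hcl : ∀ k, IsClosed (A k) := by
    intro k
    have hc : Continuous (fun (x : ℕ → Fin m) (j : Fin k) => x j) :=
      continuous_pi fun j => continuous_apply _
    exact (isClosed_discrete {g : Fin k → Fin m | η ≤ diam (S.wmap (List.ofFn g) '' K)}).preimage
      hc
  have hdec : ∀ k, A (k + 1) ⊆ A k := by
    intro k x hx
    have h1 : η ≤ diam (S.wmap (wpre x (k + 1)) '' K) := hx
    rw [wpre_succ] at h1
    exact h1.trans (diam_cyl_le hK _ _)
  have hne : ∀ k, (A k).Nonempty := by
    intro k
    obtain ⟨w, hw, h⟩ := hcon k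
    refine ⟨catSeq w fun _ => ⟨0, by omega⟩, ?_⟩
    have h1 := wpre_catSeq w fun _ => (⟨0, by omega⟩ : Fin m)
    obtain ⟨l, hl⟩ := Nat.exists_eq_add_of_le hw
    rw [hl, wpre_add] at h1
    change η ≤ _
    rw [← h1] at h
    exact h.trans (diam_cyl_le hK _ _)
  obtain ⟨x, hx⟩ := IsCompact.nonempty_iInter_of_sequence_nonempty_isCompact_isClosed A hdec hne
    (hcl 0).isCompact hcl
  obtain ⟨k, hk⟩ := exists_small_cyl hK hcod x hη
  exact absurd hk (not_lt.2 (mem_iInter.1 hx k))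

/-- Cylinder diameters decay exponentially in the length of the word. -/
lemma exp_decay (hm : 2 ≤ m) (hK : IsAttractor S K)
    (hcod : ∀ x, ∀ z ∈ K, Tendsto (fun k => S.wmap (wpre x k) z) atTop (𝓝 (proj x))) :
    ∃ C > 0, ∃ a : ℝ, 0 < a ∧ a < 1 ∧
      ∀ w : List (Fin m), diam (S.wmap w '' K) ≤ C * a ^ w.length := by
  obtain ⟨ρ, hρ, c, hc0, hc1, hc⟩ := local_contract hK
  obtain ⟨k, hk⟩ := uniform_small_cyl hm hK hcod hρ
  have hD : (0 : ℝ) ≤ diam K := diam_nonneg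
  refine ⟨(ρ + diam K) / c ^ k, by positivity, c, hc0, hc1, fun w => ?_⟩
  rcases le_or_gt k w.length with h | h
  · have hl : (w.drop (w.length - k)).length = k := by simp; omega
    have hl' : (w.take (w.length - k)).length = w.length - k := by simp
    have hb := hk _ hl.ge
    have h1 : diam (S.wmap w '' K) ≤ c ^ (w.length - k) * ρ := by
      refine diam_le_of_forall_dist_le (by positivity) ?_
      rintro _ ⟨y, hy, rfl⟩ _ ⟨y', hy', rfl⟩
      rw [← List.take_append_drop (w.length - k) w, wmap_append, wmap_append,
        List.take_append_drop]
      have h2 := (dist_le_cyl hK (w.drop (w.length - k)) hy hy').trans_lt hb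
      have h3 := hc (w.take (w.length - k)) _ (wmap_mem hK _ hy) _ (wmap_mem hK _ hy') h2
      rw [hl'] at h3
      exact h3.trans (mul_le_mul_of_nonneg_left h2.le (by positivity))
    refine h1.trans ?_
    have h4 : c ^ w.length = c ^ (w.length - k) * c ^ k := by rw [← pow_add]; congr 1; omega
    rw [h4, div_mul_eq_mul_div, le_div_iff₀ (by positivity)]
    have : 0 ≤ c ^ (w.length - k) * c ^ k := by positivity
    nlinarith
  · have h1 : diam (S.wmap w '' K) ≤ diam K := by
      have := diam_cyl_le hK [] w
      simpa [C1IFS.wmap] using this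
    refine h1.trans ?_
    have h2 : c ^ k ≤ c ^ w.length := pow_le_pow_of_le_one hc0.le hc1.le h.le
    rw [div_mul_eq_mul_div, le_div_iff₀ (by positivity)]
    have : 0 < c ^ k := by positivity
    nlinarith

lemma proj_eq_of_mem (hm : 2 ≤ m) (hK : IsAttractor S K)
    (hcod : ∀ x, ∀ z ∈ K, Tendsto (fun k => S.wmap (wpre x k) z) atTop (𝓝 (proj x)))
    {y : ℕ → Fin m} {z : Euc d} (hz : ∀ k, z ∈ S.wmap (wpre y k) '' K) : proj y = z := by
  have hzK : z ∈ K := by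
    obtain ⟨p, hp, h⟩ := hz 0
    exact h ▸ wmap_mem hK _ hp
  refine tendsto_nhds_unique (hcod y z hzK) ?_
  rw [Metric.tendsto_atTop]
  intro η hη
  obtain ⟨k, hk⟩ := uniform_small_cyl hm hK hcod hη
  refine ⟨k, fun n hn => ?_⟩
  have h1 := hk (wpre y n) (by rwa [wpre_length])
  exact (dist_le_diam_of_mem (isCompact_cyl hK _).isBounded (mem_image_of_mem _ hzK)
    (hz n)).trans_lt h1

/-- Weak conformality, for all words of a given large length and all base points in `K`. -/
lemma weak_conf (hd : 1 ≤ d) (hm : 2 ≤ m) (hK : IsAttractor S K)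
    (hwc : WeaklyConformalWith S K proj) {ε : ℝ} (hε : 0 < ε) :
    ∀ᶠ q : ℕ in atTop, ∀ w : List (Fin m), w.length = q → ∀ z ∈ K,
      ‖S.wderiv w z‖ ≤ Real.exp (ε * q) * opMinNorm (S.wderiv w z) := by
  obtain ⟨hpK, hcod, hlim⟩ := hwc
  filter_upwards [hlim.eventually (gt_mem_nhds hε), eventually_gt_atTop 0] with q hq hq0
  intro w hw z hz
  obtain ⟨y, hy⟩ := exists_address hK hz
  have hyz : proj y = z := proj_eq_of_mem hm hK hcod hy
  have hpos : ∀ w : List (Fin m), ∀ z ∈ K, 0 < opMinNorm (S.wderiv w z) := fun w z hz =>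
    opMinNorm_pos hd (wderiv_bij hK w hz).1
  have hle : ∀ w : List (Fin m), ∀ z ∈ K, opMinNorm (S.wderiv w z) ≤ ‖S.wderiv w z‖ := by
    intro w z hz
    obtain ⟨v, hv⟩ := exists_norm_one hd
    have h1 := opMinNorm_mul_le (S.wderiv w z) v
    have h2 := (S.wderiv w z).le_opNorm v
    rw [hv] at h1 h2
    linarith
  have hb1 : ∀ w : List (Fin m), ∃ B, ∀ z ∈ K,
      Real.log ‖S.wderiv w z‖ - Real.log (opMinNorm (S.wderiv w z)) ≤ B := by
    intro w
    have hc : ContinuousOn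
        (fun z => Real.log ‖S.wderiv w z‖ - Real.log (opMinNorm (S.wderiv w z))) K := by
      refine ContinuousOn.sub ?_ ?_
      · exact (wderiv_continuousOn hK w).norm.log fun z hz =>
          ((hpos w z hz).trans_le (hle w z hz)).ne'
      · exact ((opMinNorm_continuous hd).comp_continuousOn (wderiv_continuousOn hK w)).log
          fun z hz => (hpos w z hz).ne'
    obtain ⟨B, hB⟩ := (hK.1.image_of_continuousOn hc).bddAbove
    exact ⟨B, fun z hz => hB (mem_image_of_mem _ hz)⟩
  choose B hB using hb1
  have hfin : ∃ M, ∀ g : Fin q → Fin m, B (List.ofFn g) ≤ M := Finite.exists_le _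
  obtain ⟨M, hM⟩ := hfin
  have hq0' : (0 : ℝ) < q := by exact_mod_cast hq0
  -- The supremum in the hypothesis is over a bounded family, so it dominates each term.
  have hbdd : BddAbove (range fun x : ℕ → Fin m =>
      (Real.log ‖S.wderiv (wpre x q) (proj (shiftSeq x q))‖ -
        Real.log (opMinNorm (S.wderiv (wpre x q) (proj (shiftSeq x q))))) / q) := by
    refine ⟨M / q, ?_⟩
    rintro _ ⟨x, rfl⟩
    exact div_le_div_of_nonneg_right ((hB _ _ (hpK _)).trans (hM _)) hq0'.le
  have h1 := (le_ciSup hbdd (catSeq w y)).trans hq.le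
  subst hw
  simp only [wpre_catSeq, shift_catSeq, hyz] at h1
  rw [div_le_iff₀ hq0'] at h1
  have hp := hpos w z hz
  have h2 : Real.log ‖S.wderiv w z‖ ≤
      Real.log (Real.exp (ε * w.length) * opMinNorm (S.wderiv w z)) := by
    rw [Real.log_mul (Real.exp_pos _).ne' hp.ne', Real.log_exp]
    linarith
  exact (Real.log_le_log_iff (hp.trans_le (hle w z hz)) (by positivity)).1 h2

end Contraction

/-! ### Quasi-multiplicativity and prefixes at a given scale -/

section Quasi

variable {d m : ℕ} {S : C1IFS d m} {K : Set (Euc d)} {proj : (ℕ → Fin m) → Euc d}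

/-- `f_w` shrinks no distance in `K` by more than the factor `l`. -/
def LowerLip (S : C1IFS d m) (K : Set (Euc d)) (w : List (Fin m)) (l : ℝ) : Prop :=
  ∀ x ∈ K, ∀ y ∈ K, l * dist x y ≤ dist (S.wmap w x) (S.wmap w y)

lemma LowerLip.append (hK : IsAttractor S K) {u v : List (Fin m)} {l l' : ℝ} (hl : 0 ≤ l)
    (hu : LowerLip S K u l) (hv : LowerLip S K v l') : LowerLip S K (u ++ v) (l * l') := by
  intro x hx y hy
  rw [wmap_append, wmap_append, mul_assoc]
  exact (mul_le_mul_of_nonneg_left (hv x hx y hy) hl).trans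
    (hu _ (wmap_mem hK v hx) _ (wmap_mem hK v hy))

lemma LowerLip.mono {u : List (Fin m)} {l l' : ℝ} (h : l' ≤ l) (hu : LowerLip S K u l) :
    LowerLip S K u l' := fun x hx y hy =>
  (mul_le_mul_of_nonneg_right h dist_nonneg).trans (hu x hx y hy)

lemma LowerLip.mul_diam_le (hK : IsAttractor S K) {u : List (Fin m)} {l : ℝ} (hl : 0 < l)
    (hu : LowerLip S K u l) : l * diam K ≤ diam (S.wmap u '' K) := by
  rw [← le_div_iff₀' hl]
  refine diam_le_of_forall_dist_le (by positivity) fun x hx y hy => ?_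
  rw [le_div_iff₀' hl]
  exact (hu x hx y hy).trans (dist_le_cyl hK u hx hy)

/-- All distances in `K` are scaled by `f_u` at comparable rates, up to a factor that is
subexponential in the length of `u`. -/
lemma quasi_conf (hd : 1 ≤ d) (hm : 2 ≤ m) (hK : IsAttractor S K)
    (hwc : WeaklyConformalWith S K proj) {ε : ℝ} (hε : 0 < ε) :
    ∃ C > 0, ∀ u : List (Fin m), ∀ x ∈ K, ∀ y ∈ K, ∀ x' ∈ K, ∀ y' ∈ K,
      dist (S.wmap u x') (S.wmap u y') * dist x y ≤
        C * Real.exp (ε * u.length) * dist (S.wmap u x) (S.wmap u y) := by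
  have hlim : Tendsto (fun q : ℕ => Real.exp (ε / 2 * q)) atTop atTop :=
    Real.tendsto_exp_atTop.comp
      (tendsto_natCast_atTop_atTop.const_mul_atTop (half_pos hε))
  obtain ⟨q, hq, hq4, hq0⟩ := ((weak_conf hd hm hK hwc (half_pos hε)).and
    ((hlim.eventually_ge_atTop 4).and (eventually_gt_atTop 0))).exists
  -- The estimate at a uniform small scale, for words of length `q`.
  obtain ⟨ρ, hρ, hloc⟩ := uniform_scale hK.1 (Q := fun s => ∀ g : Fin q → Fin m,
      ∀ x ∈ s, ∀ y ∈ s, ∀ x' ∈ s, ∀ y' ∈ s,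
        dist (S.wmap (List.ofFn g) x') (S.wmap (List.ofFn g) y') * dist x y ≤
        Real.exp (ε * q) * dist (S.wmap (List.ofFn g) x) (S.wmap (List.ofFn g) y)
          * dist x' y') (by
    intro z hz
    choose s hs h using fun g : Fin q → Fin m => local_bilip hd hK (List.ofFn g) hz
    refine ⟨⋂ g, s g, Filter.iInter_mem.2 hs, fun g x hx y hy x' hx' y' hy' => ?_⟩
    have h1 := (h g x (mem_iInter.1 hx g) y (mem_iInter.1 hy g)).1
    have h2 := (h g x' (mem_iInter.1 hx' g) y' (mem_iInter.1 hy' g)).2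
    have h3 := hq (List.ofFn g) (by simp) z hz
    set A := opMinNorm (S.wderiv (List.ofFn g) z)
    set B := ‖S.wderiv (List.ofFn g) z‖
    set e := Real.exp (ε / 2 * q)
    have he : Real.exp (ε * q) = e * e := by rw [← Real.exp_add]; congr 1; ring
    set D := dist (S.wmap (List.ofFn g) x) (S.wmap (List.ofFn g) y)
    have hx0 : 0 ≤ dist x y := dist_nonneg
    have hx0' : 0 ≤ dist x' y' := dist_nonneg
    have hD : 0 ≤ D := dist_nonneg
    calc _ ≤ 2 * B * dist x' y' * dist x y := mul_le_mul_of_nonneg_right h2 hx0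
      _ ≤ 2 * (e * A) * dist x' y' * dist x y := by gcongr
      _ = 4 * e * dist x' y' * (A / 2 * dist x y) := by ring
      _ ≤ 4 * e * dist x' y' * D := by gcongr
      _ ≤ e * e * dist x' y' * D := by gcongr
      _ = Real.exp (ε * q) * D * dist x' y' := by rw [he]; ring)
  obtain ⟨k, hk⟩ := uniform_small_cyl hm hK hwc.2.1 hρ
  choose b hb0 hb using fun w => exists_lower_lip hd hK w
  obtain ⟨M, hM⟩ := ((List.finite_length_lt (Fin m) (k + q)).image
    fun u => diam (S.wmap u '' K) / b u).bddAbove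
  refine ⟨max M 1, by positivity, fun u => ?_⟩
  induction hn : u.length using Nat.strong_induction_on generalizing u with
  | _ n ih =>
  intro x hx y hy x' hx' y' hy'
  rcases lt_or_ge n (k + q) with hlt | hge
  · have h1 : diam (S.wmap u '' K) / b u ≤ M := hM ⟨u, by simpa [hn] using hlt, rfl⟩
    rw [div_le_iff₀ (hb0 u)] at h1
    have h2 := dist_le_cyl hK u hx' hy'
    have h3 : (1 : ℝ) ≤ Real.exp (ε * n) := Real.one_le_exp (by positivity)
    have h0 : 0 ≤ dist x y := dist_nonneg
    have hb' := (hb0 u).le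
    calc _ ≤ max M 1 * b u * dist x y := by
          refine mul_le_mul_of_nonneg_right (h2.trans (h1.trans ?_)) h0
          exact mul_le_mul_of_nonneg_right (le_max_left _ _) hb'
      _ = max M 1 * 1 * (b u * dist x y) := by ring
      _ ≤ max M 1 * Real.exp (ε * n) * dist (S.wmap u x) (S.wmap u y) := by
          have := hb u x hx y hy
          gcongr
  · by_cases hxy : x = y
    · subst hxy; simp
    set v := u.drop q with hv
    have hvl : v.length = n - q := by simp [hv, hn]
    obtain ⟨g, hg⟩ : ∃ g : Fin q → Fin m, List.ofFn g = u.take q := by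
      have : (u.take q).length = q := by simp; omega
      refine ⟨fun j => (u.take q).get (j.cast this.symm), ?_⟩
      apply List.ext_getElem
      · simp; omega
      · intro i h1 h2; simp
    have hu : ∀ z, S.wmap u z = S.wmap (List.ofFn g) (S.wmap v z) := fun z => by
      rw [hg, hv, ← wmap_append, List.take_append_drop]
    have hsm := hk v (by omega)
    obtain ⟨s, hs, hQ⟩ := hloc (S.wmap v x) (wmap_mem hK v hx)
    have hin : ∀ z ∈ K, S.wmap v z ∈ s := fun z hz =>
      hs (mem_ball.2 ((dist_le_cyl hK v hz hx).trans_lt hsm))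
    have h1 := hQ g _ (hin x hx) _ (hin y hy) _ (hin x' hx') _ (hin y' hy')
    have h2 := ih (n - q) (by omega) v hvl x hx y hy x' hx' y' hy'
    rw [← hu, ← hu, ← hu, ← hu] at h1
    have hpos : 0 < dist (S.wmap v x) (S.wmap v y) :=
      dist_pos.2 fun h => hxy (wmap_injOn hK v hx hy h)
    have he : Real.exp (ε * n) = Real.exp (ε * q) * Real.exp (ε * (n - q : ℕ)) := by
      rw [← Real.exp_add, Nat.cast_sub (by omega)]; congr 1; ring
    refine le_of_mul_le_mul_right ?_ hpos
    have h0 : 0 ≤ dist x y := dist_nonneg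
    have h0' : 0 ≤ dist (S.wmap u x) (S.wmap u y) := dist_nonneg
    calc dist (S.wmap u x') (S.wmap u y') * dist x y * dist (S.wmap v x) (S.wmap v y)
        = dist (S.wmap u x') (S.wmap u y') * dist (S.wmap v x) (S.wmap v y) * dist x y := by
          ring
      _ ≤ Real.exp (ε * q) * dist (S.wmap u x) (S.wmap u y)
          * dist (S.wmap v x') (S.wmap v y') * dist x y := mul_le_mul_of_nonneg_right h1 h0
      _ = Real.exp (ε * q) * dist (S.wmap u x) (S.wmap u y)
          * (dist (S.wmap v x') (S.wmap v y') * dist x y) := by ring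
      _ ≤ Real.exp (ε * q) * dist (S.wmap u x) (S.wmap u y)
          * (max M 1 * Real.exp (ε * (n - q : ℕ)) * dist (S.wmap v x) (S.wmap v y)) := by
          gcongr
      _ = _ := by rw [he]; ring

/-- The lower Lipschitz constant of `f_u` is at least about a power `1 + θ` of the diameter of
its cylinder. -/
lemma lowerLip_diam (hd : 1 ≤ d) (hm : 2 ≤ m) (hK : IsAttractor S K)
    (hwc : WeaklyConformalWith S K proj) {θ : ℝ} (hθ : 0 < θ) :
    ∃ c > 0, ∀ u : List (Fin m), LowerLip S K u (c * diam (S.wmap u '' K) ^ (1 + θ)) := by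
  obtain ⟨C₁, hC₁, a, ha0, ha1, hdec⟩ := exp_decay hm hK hwc.2.1
  have hε : 0 < -θ * Real.log a := by
    have := Real.log_neg ha0 ha1
    nlinarith
  obtain ⟨C, hC, h⟩ := quasi_conf hd hm hK hwc hε
  refine ⟨(C * C₁ ^ θ)⁻¹, by positivity, fun u x hx y hy => ?_⟩
  set D := diam (S.wmap u '' K) with hD
  have hD0 : 0 ≤ D := diam_nonneg
  set T := dist (S.wmap u x) (S.wmap u y)
  have hT : 0 ≤ T := dist_nonneg
  set E := Real.exp (-θ * Real.log a * u.length)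
  have hE : (a ^ u.length) ^ θ * E = 1 := by
    have : a ^ u.length = Real.exp (Real.log a * u.length) := by
      rw [mul_comm, Real.exp_nat_mul, Real.exp_log ha0]
    rw [this, ← Real.exp_mul, ← Real.exp_add]
    simp only [Real.exp_eq_one_iff]
    ring
  have h1 : D * dist x y ≤ C * E * T := by
    rcases eq_or_lt_of_le (dist_nonneg (x := x) (y := y)) with h0 | h0
    · rw [← h0, mul_zero]; positivity
    · rw [← le_div_iff₀ h0]
      refine diam_le_of_forall_dist_le (by positivity) ?_
      rintro _ ⟨x', hx', rfl⟩ _ ⟨y', hy', rfl⟩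
      rw [le_div_iff₀ h0]
      exact h u x hx y hy x' hx' y' hy'
  have h2 : D ^ θ ≤ C₁ ^ θ * (a ^ u.length) ^ θ := by
    rw [← Real.mul_rpow hC₁.le (by positivity)]
    exact Real.rpow_le_rpow hD0 (hdec u) hθ.le
  have h3 : D ^ (1 + θ) = D * D ^ θ := by
    rw [Real.rpow_add_of_nonneg hD0 zero_le_one hθ.le, Real.rpow_one]
  rw [h3, mul_assoc, inv_mul_le_iff₀ (by positivity)]
  calc D * D ^ θ * dist x y = D ^ θ * (D * dist x y) := by ring
    _ ≤ (C₁ ^ θ * (a ^ u.length) ^ θ) * (C * E * T) :=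
        mul_le_mul h2 h1 (by positivity) (by positivity)
    _ = C * C₁ ^ θ * T * ((a ^ u.length) ^ θ * E) := by ring
    _ = C * C₁ ^ θ * T := by rw [hE, mul_one]

/-- Every sequence of letters has a prefix `w` with `|f_w(K)| ≤ r` and lower Lipschitz constant
at least `r ^ (1 + θ)`. -/
lemma exists_prefix (hd : 1 ≤ d) (hm : 2 ≤ m) (hK : IsAttractor S K)
    (hwc : WeaklyConformalWith S K proj) (hdiam : 0 < diam K) {θ : ℝ} (hθ : 0 < θ) :
    ∃ r₀ > 0, ∀ r, 0 < r → r < r₀ → ∀ ξ : ℕ → Fin m,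
      ∃ k, diam (S.wmap (wpre ξ k) '' K) ≤ r ∧ LowerLip S K (wpre ξ k) (r ^ (1 + θ)) := by
  obtain ⟨c, hc, hlow⟩ := lowerLip_diam hd hm hK hwc (half_pos hθ)
  obtain ⟨b, hb, hbl⟩ : ∃ b > 0, ∀ i, LowerLip S K [i] b := by
    choose b hb0 hb using fun i => exists_lower_lip hd hK [i]
    obtain ⟨⟨M, hM0⟩, hM⟩ := Finite.exists_ge (fun i => (⟨b i, hb0 i⟩ : Ioi (0 : ℝ)))
    exact ⟨M, hM0, fun i => LowerLip.mono (hM i) (hb i)⟩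
  refine ⟨min (diam K) ((c * b) ^ (θ / 2)⁻¹), by positivity, fun r hr hr0 ξ => ?_⟩
  have hex : ∃ k, diam (S.wmap (wpre ξ k) '' K) ≤ r := by
    obtain ⟨k, hk⟩ := uniform_small_cyl hm hK hwc.2.1 hr
    exact ⟨k, (hk _ (wpre_length ξ k).ge).le⟩
  classical
  refine ⟨Nat.find hex, Nat.find_spec hex, ?_⟩
  obtain ⟨k, hk⟩ : ∃ k, Nat.find hex = k + 1 := by
    refine Nat.exists_eq_succ_of_ne_zero fun h0 => ?_
    have h1 := Nat.find_spec hex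
    rw [h0] at h1
    have h2 : S.wmap (wpre ξ 0) '' K = K := by simp [wpre, C1IFS.wmap]
    rw [h2] at h1
    exact absurd (hr0.trans_le (min_le_left _ _)) (not_lt.2 h1)
  have hmin : r < diam (S.wmap (wpre ξ k) '' K) :=
    not_le.1 (Nat.find_min hex (by omega : k < Nat.find hex))
  rw [hk, wpre_succ]
  refine LowerLip.mono ?_ ((hlow (wpre ξ k)).append hK (by positivity) (hbl (ξ k)))
  have h3 : r ^ (θ / 2) ≤ c * b := by
    have h4 : r ≤ (c * b) ^ (θ / 2)⁻¹ := (hr0.trans_le (min_le_right _ _)).le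
    have h5 := Real.rpow_le_rpow hr.le h4 (half_pos hθ).le
    rwa [Real.rpow_inv_rpow (by positivity) (half_pos hθ).ne'] at h5
  calc r ^ (1 + θ) = r ^ (1 + θ / 2) * r ^ (θ / 2) := by
        rw [← Real.rpow_add hr]; congr 1; ring
    _ ≤ diam (S.wmap (wpre ξ k) '' K) ^ (1 + θ / 2) * (c * b) := by
        gcongr
    _ = _ := by ring

end Quasi

/-! ### Separated subsystems -/

section Packing

variable {d m : ℕ} {S : C1IFS d m} {K : Set (Euc d)} {proj : (ℕ → Fin m) → Euc d}

lemma exists_separated_net (hKc : IsCompact K) {r : ℝ} (hr : 0 < r) :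
    ∃ T : Finset (Euc d), (T : Set (Euc d)) ⊆ K ∧
      (∀ x ∈ T, ∀ y ∈ T, x ≠ y → r < dist x y) ∧ K ⊆ ⋃ y ∈ T, closedBall y r := by
  set ε : ℝ≥0 := r.toNNReal with hε
  have hε0 : ε ≠ 0 := (Real.toNNReal_pos.2 hr).ne'
  have hεr : (ε : ℝ) = r := Real.coe_toNNReal _ hr.le
  have hfin : packingNumber ε K ≠ ⊤ := by
    obtain ⟨N, -, hN, hcov⟩ := exists_finite_isCover_of_isCompact (ε := ε / 2)
      (by simpa using hε0) hKc
    have h1 := packingNumber_two_mul_le_externalCoveringNumber (ε / 2) K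
    rw [mul_div_cancel₀ ε two_ne_zero] at h1
    exact ((h1.trans hcov.externalCoveringNumber_le_encard).trans_lt hN.encard_lt_top).ne
  have hTf : (maximalSeparatedSet ε K).Finite := by
    rw [← Set.encard_ne_top_iff, encard_maximalSeparatedSet hfin]
    exact hfin
  refine ⟨hTf.toFinset, ?_, ?_, ?_⟩
  · rw [hTf.coe_toFinset]; exact maximalSeparatedSet_subset
  · intro x hx y hy hxy
    rw [hTf.mem_toFinset] at hx hy
    have h1 : (ε : ℝ≥0∞) < edist x y := isSeparated_maximalSeparatedSet hx hy hxy
    rw [edist_nndist, ENNReal.coe_lt_coe] at h1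
    have h2 : (ε : ℝ) < dist x y := h1
    rwa [hεr] at h2
  · have h1 := isCover_iff_subset_iUnion_closedBall.1 (isCover_maximalSeparatedSet hfin)
    rw [hεr] at h1
    simpa using h1

/-- A set of dimension larger than `s` contains more than `r ^ (-s)` points at mutual distance
more than `3 r`, for arbitrarily small `r`. -/
lemma exists_many_separated (hKc : IsCompact K) {s : ℝ} (hs : 0 < s)
    (hdim : ENNReal.ofReal s < dimH K) {r₀ : ℝ} (hr₀ : 0 < r₀) :
    ∃ r, 0 < r ∧ r < r₀ ∧ ∃ T : Finset (Euc d), (T : Set (Euc d)) ⊆ K ∧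
      (∀ x ∈ T, ∀ y ∈ T, x ≠ y → 3 * r < dist x y) ∧ r ^ (-s) < T.card := by
  by_contra! hcon
  let r : ℕ → ℝ := fun n => r₀ / (n + 2)
  have hr : ∀ n, 0 < r n := fun n => by positivity
  have hrlt : ∀ n, r n < r₀ := fun n => by
    have : (0 : ℝ) ≤ n := n.cast_nonneg
    exact div_lt_self hr₀ (by linarith)
  have hrlim : Tendsto r atTop (𝓝 0) :=
    Tendsto.div_atTop tendsto_const_nhds
      (tendsto_atTop_add_const_right _ _ tendsto_natCast_atTop_atTop)
  choose T hTK hTs hTc using fun n => exists_separated_net hKc (mul_pos three_pos (hr n))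
  have hcard : ∀ n, ((T n).card : ℝ) ≤ r n ^ (-s) := fun n =>
    hcon (r n) (hr n) (hrlt n) (T n) (hTK n) (hTs n)
  have hball : ∀ n (y : Euc d), ediam (closedBall y (3 * r n)) ≤ ENNReal.ofReal (6 * r n) := by
    intro n y
    refine ediam_le fun a ha b hb => ?_
    rw [edist_dist]
    refine ENNReal.ofReal_le_ofReal ?_
    have := dist_triangle_right a b y
    have h1 := mem_closedBall.1 ha
    have h2 := mem_closedBall.1 hb
    linarith
  have hH := Measure.hausdorffMeasure_le_liminf_sum (ι := fun n => T n) s K (l := atTop)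
    (fun n => ENNReal.ofReal (6 * r n))
    (by
      have := ENNReal.tendsto_ofReal (hrlim.const_mul 6)
      simpa using this)
    (fun n y => closedBall (y : Euc d) (3 * r n))
    (Eventually.of_forall fun n y => hball n y)
    (Eventually.of_forall fun n => by
      intro z hz
      obtain ⟨y, hy, hzy⟩ := mem_iUnion₂.1 (hTc n hz)
      exact mem_iUnion.2 ⟨⟨y, hy⟩, hzy⟩)
  have hsum : ∀ n, ∑ y : T n, ediam (closedBall (y : Euc d) (3 * r n)) ^ s
      ≤ ENNReal.ofReal (6 ^ s) := by
    intro n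
    calc ∑ y : T n, ediam (closedBall (y : Euc d) (3 * r n)) ^ s
        ≤ ∑ y : T n, ENNReal.ofReal ((6 * r n) ^ s) := by
          refine Finset.sum_le_sum fun y _ => ?_
          rw [← ENNReal.ofReal_rpow_of_nonneg (by have := hr n; positivity) hs.le]
          exact ENNReal.rpow_le_rpow (hball n y) hs.le
      _ = ENNReal.ofReal ((T n).card * (6 * r n) ^ s) := by
          rw [Finset.sum_const, nsmul_eq_mul, ENNReal.ofReal_mul (by positivity),
            ENNReal.ofReal_natCast, Finset.card_univ, Fintype.card_coe]
      _ ≤ ENNReal.ofReal (6 ^ s) := by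
          refine ENNReal.ofReal_le_ofReal ?_
          have h1 := hr n
          rw [Real.mul_rpow (by norm_num) h1.le]
          calc ((T n).card : ℝ) * (6 ^ s * r n ^ s) ≤ r n ^ (-s) * (6 ^ s * r n ^ s) := by
                gcongr; exact hcard n
            _ = 6 ^ s * (r n ^ (-s) * r n ^ s) := by ring
            _ = 6 ^ s := by rw [← Real.rpow_add h1]; simp
  have hfin : μH[s] K ≤ ENNReal.ofReal (6 ^ s) :=
    hH.trans ((liminf_le_liminf (Eventually.of_forall hsum)).trans (by simp))
  have htop : μH[(s.toNNReal : ℝ)] K = ∞ := hausdorffMeasure_of_lt_dimH hdim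
  rw [Real.coe_toNNReal _ hs.le] at htop
  rw [htop] at hfin
  exact absurd hfin (by simp)

/-- Finitely many words whose cylinders are `r`-separated, have lower Lipschitz constant
`r ^ (1 + θ)`, and are numerous enough to carry dimension almost `s`. -/
lemma exists_subsystem (hd : 1 ≤ d) (hm : 2 ≤ m) (hK : IsAttractor S K)
    (hwc : WeaklyConformalWith S K proj) (hdiam : 0 < diam K) {θ s : ℝ} (hθ : 0 < θ)
    (hs : 0 < s) (hdim : ENNReal.ofReal s < dimH K) {r₀ : ℝ} (hr₀ : 0 < r₀) :
    ∃ r, 0 < r ∧ r < r₀ ∧ ∃ (N : ℕ) (γ : Fin N → List (Fin m)), r ^ (-s) < N ∧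
      (∀ a, γ a ≠ []) ∧ (∀ a, LowerLip S K (γ a) (r ^ (1 + θ))) ∧
      ∀ a b, a ≠ b → ∀ x ∈ K, ∀ y ∈ K, r ≤ dist (S.wmap (γ a) x) (S.wmap (γ b) y) := by
  obtain ⟨r₁, hr₁, hpref⟩ := exists_prefix hd hm hK hwc hdiam hθ
  obtain ⟨r, hr, hrlt, T, hTK, hTs, hcard⟩ :=
    exists_many_separated hK.1 hs hdim (lt_min hr₀ (lt_min hr₁ hdiam))
  obtain ⟨hrr₀, hrr₁, hrd⟩ : r < r₀ ∧ r < r₁ ∧ r < diam K := by simpa using hrlt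
  have hword : ∀ y : T, ∃ w : List (Fin m), (y : Euc d) ∈ S.wmap w '' K ∧
      diam (S.wmap w '' K) ≤ r ∧ LowerLip S K w (r ^ (1 + θ)) := by
    intro y
    obtain ⟨ξ, hξ⟩ := exists_address hK (hTK y.2)
    obtain ⟨k, hk1, hk2⟩ := hpref r hr hrr₁ ξ
    exact ⟨_, hξ k, hk1, hk2⟩
  choose w hw1 hw2 hw3 using hword
  let e := T.equivFin
  refine ⟨r, hr, hrr₀, T.card, fun a => w (e.symm a), hcard, fun a h => ?_, fun a => hw3 _, ?_⟩
  · have h1 := hw2 (e.symm a)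
    simp only [h] at h1
    have h2 : S.wmap [] '' K = K := by simp [C1IFS.wmap]
    rw [h2] at h1
    linarith
  · intro a b hab x hx y hy
    have hne : (e.symm a : Euc d) ≠ e.symm b := fun h => hab (e.symm.injective (Subtype.ext h))
    have h1 := hTs _ (e.symm a).2 _ (e.symm b).2 hne
    have h2 := (dist_le_diam_of_mem (isCompact_cyl hK _).isBounded (hw1 (e.symm a))
      (mem_image_of_mem _ hx)).trans (hw2 _)
    have h3 := (dist_le_diam_of_mem (isCompact_cyl hK _).isBounded
      (mem_image_of_mem _ hy) (hw1 (e.symm b))).trans (hw2 _)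
    have h4 := dist_triangle4 (e.symm a : Euc d) (S.wmap (w (e.symm a)) x)
      (S.wmap (w (e.symm b)) y) (e.symm b)
    linarith

end Packing

/-! ### The Cantor set inside the limsup set -/

section Cantor

variable {d m : ℕ} {S : C1IFS d m} {K : Set (Euc d)} {proj : (ℕ → Fin m) → Euc d}

/-- If `g` is a `t`-Hölder function of `Φ` onto `[0, 1]`, then `range Φ` has dimension at
least `t`. -/
lemma le_dimH_range {α : Type*} {Φ : α → Euc d} {g : α → ℝ} {C t : ℝ} (hC : 0 < C) (ht : 0 < t)
    (h : ∀ ξ η, |g ξ - g η| ≤ C * dist (Φ ξ) (Φ η) ^ t) (hg : Icc 0 1 ⊆ range g) :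
    ENNReal.ofReal t ≤ dimH (range Φ) := by
  obtain ⟨ξ₀, -⟩ := hg (⟨le_rfl, zero_le_one⟩ : (0 : ℝ) ∈ Icc 0 1)
  have : Nonempty α := ⟨ξ₀⟩
  choose! q hq using fun (y : Euc d) (hy : y ∈ range Φ) => hy
  have hold : HolderOnWith C.toNNReal t.toNNReal (fun y => g (q y)) (range Φ) := by
    intro x hx y hy
    rw [edist_dist, edist_dist, Real.coe_toNNReal _ ht.le,
      ENNReal.ofReal_rpow_of_nonneg dist_nonneg ht.le]
    change _ ≤ ENNReal.ofReal C * _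
    rw [← ENNReal.ofReal_mul hC.le]
    refine ENNReal.ofReal_le_ofReal ?_
    have := h (q x) (q y)
    rwa [hq x hx, hq y hy] at this
  have himg : Icc 0 1 ⊆ (fun y => g (q y)) '' range Φ := by
    intro c hc
    obtain ⟨ξ, rfl⟩ := hg hc
    refine ⟨Φ ξ, mem_range_self ξ, ?_⟩
    have h1 := h (q (Φ ξ)) ξ
    rw [hq _ (mem_range_self ξ), dist_self, Real.zero_rpow ht.ne', mul_zero] at h1
    exact sub_eq_zero.1 (abs_nonpos_iff.1 h1)
  have h1 : (1 : ℝ≥0∞) ≤ dimH (range Φ) / (t.toNNReal : ℝ≥0∞) := by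
    refine le_trans ?_ (hold.dimH_image_le (Real.toNNReal_pos.2 ht))
    refine le_trans ?_ (dimH_mono himg)
    rw [Real.dimH_of_nonempty_interior (by rw [interior_Icc]; exact ⟨1 / 2, by norm_num⟩)]
    simp
  have ht0 : (t.toNNReal : ℝ≥0∞) ≠ 0 := by simpa using ht
  rwa [ENNReal.le_div_iff_mul_le (Or.inl ht0) (Or.inl ENNReal.coe_ne_top), one_mul] at h1

/-- A word `w` can be prolonged so that its cylinder falls into the ball
`B(f_w(x₀), |f_w(K)|^δ)`, at the cost of raising the lower Lipschitz constant to a power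
close to `δ`: the prolongation follows an address of `x₀`. -/
lemma exists_insertion (hd : 1 ≤ d) (hm : 2 ≤ m) (hK : IsAttractor S K)
    (hwc : WeaklyConformalWith S K proj) (hdiam : 0 < diam K) {θ : ℝ} (hθ : 0 < θ)
    {x₀ : Euc d} (hx₀ : x₀ ∈ K) {δ : ℝ} (hδ : 1 ≤ δ) :
    ∃ κ, 0 < κ ∧ κ ≤ 1 ∧ ∃ r₀ > 0, ∀ (w : List (Fin m)) (l : ℝ), 0 < l → l < r₀ →
      LowerLip S K w l → ∃ v, LowerLip S K (w ++ v) ((κ * l) ^ (δ * (1 + θ))) ∧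
        S.wmap (w ++ v) '' K ⊆ closedBall (S.wmap w x₀) (diam (S.wmap w '' K) ^ δ) := by
  obtain ⟨r₁, hr₁, hpref⟩ := exists_prefix hd hm hK hwc hdiam hθ
  obtain ⟨y, hy⟩ := exists_address hK hx₀
  refine ⟨min (diam K) 1, by positivity, min_le_right _ _, min r₁ 1, by positivity, ?_⟩
  intro w l hl hl0 hw
  set κ := min (diam K) 1 with hκ
  have hκ0 : 0 < κ := by positivity
  have hκl : κ * l ≤ l := mul_le_of_le_one_left hl.le (min_le_right _ _)
  have hl1 : l < 1 := hl0.trans_le (min_le_right _ _)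
  have hpos : 0 < κ * l := by positivity
  have hrle : (κ * l) ^ δ ≤ κ * l := by
    have := Real.rpow_le_rpow_of_exponent_ge hpos (hκl.trans hl1.le) hδ
    rwa [Real.rpow_one] at this
  have hcyl : κ * l ≤ diam (S.wmap w '' K) := by
    refine le_trans ?_ (hw.mul_diam_le hK hl)
    rw [mul_comm]
    exact mul_le_mul_of_nonneg_left (min_le_left _ _) hl.le
  have hcyl' : (κ * l) ^ δ ≤ diam (S.wmap w '' K) ^ δ :=
    Real.rpow_le_rpow hpos.le hcyl (by linarith)
  have hsub : ∀ v, x₀ ∈ S.wmap v '' K → diam (S.wmap (w ++ v) '' K) ≤ (κ * l) ^ δ →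
      S.wmap (w ++ v) '' K ⊆ closedBall (S.wmap w x₀) (diam (S.wmap w '' K) ^ δ) := by
    rintro v ⟨z, hz, hzx⟩ hv p hp
    have h1 : S.wmap w x₀ ∈ S.wmap (w ++ v) '' K := ⟨z, hz, by rw [wmap_append, hzx]⟩
    exact mem_closedBall.2 ((dist_le_diam_of_mem (isCompact_cyl hK _).isBounded hp h1).trans
      (hv.trans hcyl'))
  obtain ⟨k, hk1, hk2⟩ := hpref ((κ * l) ^ δ) (by positivity)
    ((hrle.trans hκl).trans_lt (hl0.trans_le (min_le_left _ _))) (catSeq w y)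
  rw [← Real.rpow_mul hpos.le] at hk2
  rcases le_total w.length k with hk | hk
  · obtain ⟨j, rfl⟩ := Nat.exists_eq_add_of_le hk
    rw [wpre_catSeq_add] at hk1 hk2
    exact ⟨wpre y j, hk2, hsub _ (hy j) hk1⟩
  ·
    -- The word `w` itself is already long enough.
    refine ⟨[], ?_, hsub [] ⟨x₀, hx₀, rfl⟩ ?_⟩
    · rw [List.append_nil]
      refine hw.mono (le_trans ?_ hκl)
      have := Real.rpow_le_rpow_of_exponent_ge hpos (hκl.trans hl1.le)
        (show (1 : ℝ) ≤ δ * (1 + θ) by nlinarith)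
      rwa [Real.rpow_one] at this
    · rw [List.append_nil]
      obtain ⟨j, hj⟩ := Nat.exists_eq_add_of_le hk
      refine le_trans ?_ hk1
      have h1 := wpre_catSeq w y
      rw [hj, wpre_add] at h1
      have h3 := diam_cyl_le (S := S) hK (wpre (catSeq w y) k) (wpre (shiftSeq (catSeq w y) k) j)
      rw [h1] at h3
      exact h3

/-- Scales for the construction. Each step multiplies by `l`, and in addition some steps raise to
the power `p`; such an insertion is made exactly when the bound `N ^ (-n) ≤ L n ^ t` survives,
which happens infinitely often because `N⁻¹ < l ^ (p t)`. -/
lemma exists_scales {κ l p t : ℝ} (hκ : 0 < κ) (hκ1 : κ ≤ 1) (hl : 0 < l) (hl1 : l < 1)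
    (hp : 1 ≤ p) (ht : 0 < t) {N : ℕ} (hN : 0 < N) (hNl : (N : ℝ)⁻¹ < l ^ (p * t)) :
    ∃ L : ℕ → ℝ, L 0 = 1 ∧ (∀ n, 0 < L n ∧ L n ≤ 1) ∧ (∀ n, ((N : ℝ) ^ n)⁻¹ ≤ L n ^ t) ∧
      (∀ n, L (n + 1) = (κ * (l * L n)) ^ p ∨ L (n + 1) = l * L n) ∧
      ∀ k, ∃ n ≥ k, L (n + 1) = (κ * (l * L n)) ^ p := by
  classical
  let step : ℕ → ℝ → ℝ := fun n a =>
    if ((N : ℝ) ^ (n + 1))⁻¹ ≤ (κ * (l * a)) ^ (p * t) then (κ * (l * a)) ^ p else l * a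
  let L : ℕ → ℝ := fun n => Nat.rec (motive := fun _ => ℝ) 1 step n
  have hL : ∀ n, L (n + 1) = step n (L n) := fun n => rfl
  have hN' : (0 : ℝ) < N := by exact_mod_cast hN
  have hpos : ∀ n, 0 < L n ∧ L n ≤ 1 := by
    intro n
    induction n with
    | zero => exact ⟨one_pos, le_rfl⟩
    | succ n ih =>
      obtain ⟨h0, h1⟩ := ih
      have h2 : l * L n ≤ 1 := mul_le_one₀ hl1.le h0.le h1
      have h3 : κ * (l * L n) ≤ 1 := mul_le_one₀ hκ1 (by positivity) h2
      rw [hL]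
      simp only [step]
      split_ifs
      · exact ⟨by positivity, Real.rpow_le_one (by positivity) h3 (by linarith)⟩
      · exact ⟨by positivity, h2⟩
  refine ⟨L, rfl, hpos, ?_, ?_, ?_⟩
  · intro n
    induction n with
    | zero => simp [L]
    | succ n ih =>
      have h0 := (hpos n).1
      rw [hL]
      simp only [step]
      split_ifs with h
      · rwa [← Real.rpow_mul (by positivity)]
      · rw [Real.mul_rpow hl.le h0.le, pow_succ, mul_inv, mul_comm]
        refine mul_le_mul (hNl.le.trans ?_) ih (by positivity) (by positivity)
        exact Real.rpow_le_rpow_of_exponent_ge hl hl1.le (by nlinarith)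
  · intro n
    rw [hL]
    simp only [step]
    split_ifs
    · exact Or.inl rfl
    · exact Or.inr rfl
  · intro k
    by_contra! hcon
    have hno : ∀ n ≥ k, (κ * (l * L n)) ^ (p * t) < ((N : ℝ) ^ (n + 1))⁻¹ := by
      intro n hn
      by_contra! h
      refine hcon n hn ?_
      rw [hL]
      simp only [step]
      rw [if_pos h]
    have hgeo : ∀ j, L (k + j) = l ^ j * L k := by
      intro j
      induction j with
      | zero => simp
      | succ j ih =>
        rw [← add_assoc, hL]
        simp only [step]
        rw [if_neg (not_le.2 (hno _ (by omega))), ih, pow_succ]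
        ring
    have hk0 := (hpos k).1
    set A := (κ * L k) ^ (p * t) with hA
    have hA0 : 0 < A := by positivity
    set β := (N : ℝ)⁻¹ / l ^ (p * t) with hβ
    have hlp : 0 < l ^ (p * t) := by positivity
    have hβ1 : β < 1 := (div_lt_one hlp).2 hNl
    have hβ0 : 0 < β := by positivity
    obtain ⟨j, hj⟩ := exists_pow_lt_of_lt_one hA0 hβ1
    have h1 := hno (k + j) (by omega)
    have h2 : κ * (l * L (k + j)) = κ * L k * l ^ (j + 1) := by rw [hgeo, pow_succ]; ring
    rw [h2, Real.mul_rpow (by positivity) (by positivity), ← hA] at h1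
    have h3 : (l ^ (j + 1)) ^ (p * t) = (l ^ (p * t)) ^ (j + 1) := by
      rw [← Real.rpow_natCast, ← Real.rpow_mul hl.le, mul_comm ((j + 1 : ℕ) : ℝ),
        Real.rpow_mul hl.le, Real.rpow_natCast]
    have h4 : ((N : ℝ) ^ (k + j + 1))⁻¹ ≤ ((N : ℝ)⁻¹) ^ (j + 1) := by
      rw [inv_pow]
      refine inv_anti₀ (by positivity) (pow_le_pow_right₀ (by exact_mod_cast hN) (by omega))
    have h5 : (N : ℝ)⁻¹ = β * l ^ (p * t) := by rw [hβ]; field_simp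
    rw [h5, mul_pow] at h4
    rw [h3] at h1
    have h6 : A < β ^ (j + 1) := by
      have := h1.trans_le h4
      exact lt_of_mul_lt_mul_right this (by positivity)
    have h7 : β ^ (j + 1) ≤ β ^ j := pow_le_pow_of_le_one hβ0.le hβ1.le (by omega)
    linarith

/-- The lower bound: every `t < s₀ / δ` is at most the dimension of the limsup set. -/
lemma lower_bound (hd : 1 ≤ d) (hm : 2 ≤ m) (hK : IsAttractor S K)
    (hwc : WeaklyConformalWith S K proj) (hdiam : 0 < diam K) {s₀ : ℝ}
    (hdim : dimH K = ENNReal.ofReal s₀) {x₀ : Euc d} (hx₀ : x₀ ∈ K) {δ : ℝ} (hδ : 1 ≤ δ)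
    {t : ℝ} (ht : 0 < t) (hts : δ * t < s₀) :
    ENNReal.ofReal t ≤
      dimH (limsupWords fun w => closedBall (S.wmap w x₀) (diam (S.wmap w '' K) ^ δ)) := by
  have hδ0 : 0 < δ := by linarith
  obtain ⟨θ, hθe, hθ⟩ : ∃ θ : ℝ, (1 + θ) * (δ * (1 + θ) * t) < s₀ ∧ 0 < θ := by
    have hc : Tendsto (fun θ : ℝ => (1 + θ) * (δ * (1 + θ) * t)) (𝓝[>] 0) (𝓝 (δ * t)) := by
      have : Continuous fun θ : ℝ => (1 + θ) * (δ * (1 + θ) * t) := by fun_prop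
      have h := (this.tendsto 0).mono_left (nhdsWithin_le_nhds (s := Ioi 0))
      simpa using h
    exact ((hc.eventually (gt_mem_nhds hts)).and self_mem_nhdsWithin).exists
  set p := δ * (1 + θ) with hp
  have hp1 : 1 ≤ p := by nlinarith
  set e := (1 + θ) * (p * t) with he
  have he0 : 0 < e := by positivity
  have hedim : ENNReal.ofReal e < dimH K := by
    rw [hdim]
    exact (ENNReal.ofReal_lt_ofReal_iff (he0.trans hθe)).2 hθe
  obtain ⟨κ, hκ0, hκ1, r₁, hr₁, hins⟩ := exists_insertion hd hm hK hwc hdiam hθ hx₀ hδ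
  obtain ⟨r, hr, hrlt, N, γ, hNr, hγne, hγlow, hγsep⟩ :=
    exists_subsystem hd hm hK hwc hdiam hθ he0 hedim (lt_min hr₁ one_pos)
  have hrr₁ : r < r₁ := hrlt.trans_le (min_le_left _ _)
  have hr1 : r < 1 := hrlt.trans_le (min_le_right _ _)
  set l := r ^ (1 + θ) with hl
  have hl0 : 0 < l := by positivity
  have hlr : l ≤ r := by
    have := Real.rpow_le_rpow_of_exponent_ge hr hr1.le (by linarith : (1 : ℝ) ≤ 1 + θ)
    rwa [Real.rpow_one] at this
  have hre : 0 < r ^ e := by positivity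
  have hN1 : (1 : ℝ) < N := by
    refine lt_of_le_of_lt ?_ hNr
    rw [Real.rpow_neg hr.le]
    exact (one_le_inv₀ hre).2 (Real.rpow_le_one hr.le hr1.le he0.le)
  have hN : 1 < N := by exact_mod_cast hN1
  have hNl : (N : ℝ)⁻¹ < l ^ (p * t) := by
    rw [hl, ← Real.rpow_mul hr.le, ← he]
    rw [Real.rpow_neg hr.le] at hNr
    exact inv_lt_of_inv_lt₀ hre hNr
  obtain ⟨L, hL0, hLpos, hLt, hLstep, hLinf⟩ := exists_scales hκ0 hκ1 hl0 (hlr.trans_lt hr1) hp1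
    ht (by omega : 0 < N) hNl
  have hins' : ∀ (w : List (Fin m)) (n : ℕ), ∃ v, LowerLip S K w (l * L n) →
      LowerLip S K (w ++ v) ((κ * (l * L n)) ^ p) ∧
        S.wmap (w ++ v) '' K ⊆ closedBall (S.wmap w x₀) (diam (S.wmap w '' K) ^ δ) := by
    intro w n
    by_cases h : LowerLip S K w (l * L n)
    · obtain ⟨h0, h1⟩ := hLpos n
      obtain ⟨v, hv⟩ := hins w (l * L n) (by positivity)
        (((mul_le_of_le_one_right hl0.le h1).trans hlr).trans_lt hrr₁) h
      exact ⟨v, fun _ => hv⟩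
    · exact ⟨[], fun h' => absurd h' h⟩
  choose v hv using hins'
  classical
  -- The suffix written after the `n`-th letter: an insertion, or nothing.
  let ext : ℕ → List (Fin m) → List (Fin m) := fun n w =>
    if L (n + 1) = (κ * (l * L n)) ^ p then v w n else []
  let W : (ℕ → Fin N) → ℕ → List (Fin m) := fun ξ n =>
    Nat.rec (motive := fun _ => List (Fin m)) []
      (fun n w => (w ++ γ (ξ n)) ++ ext n (w ++ γ (ξ n))) n
  have hW : ∀ ξ n, W ξ (n + 1) = (W ξ n ++ γ (ξ n)) ++ ext n (W ξ n ++ γ (ξ n)) :=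
    fun ξ n => rfl
  have hWlow : ∀ ξ n, LowerLip S K (W ξ n) (L n) := by
    intro ξ n
    induction n with
    | zero => intro x _ y _; simp [W, hL0, C1IFS.wmap]
    | succ n ih =>
      have h1 : LowerLip S K (W ξ n ++ γ (ξ n)) (l * L n) := by
        rw [mul_comm]
        exact ih.append hK (hLpos n).1.le (hγlow (ξ n))
      rw [hW]
      simp only [ext]
      split_ifs with h
      · rw [h]; exact (hv _ n h1).1
      · rw [List.append_nil]
        rcases hLstep n with h' | h'
        · exact absurd h' h
        · rwa [h']
  have hWlen : ∀ ξ n, n ≤ (W ξ n).length := by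
    intro ξ n
    induction n with
    | zero => simp
    | succ n ih =>
      have := List.length_pos_iff.2 (hγne (ξ n))
      rw [hW]
      simp only [List.length_append]
      omega
  have hWcongr : ∀ ξ η n, (∀ i < n, ξ i = η i) → W ξ n = W η n := by
    intro ξ η n h
    induction n with
    | zero => rfl
    | succ n ih => rw [hW, hW, ih fun i hi => h i (by omega), h n (by omega)]
  have hpt : ∀ ξ, (⋂ n, S.wmap (W ξ n) '' K).Nonempty := by
    intro ξ
    refine IsCompact.nonempty_iInter_of_sequence_nonempty_isCompact_isClosed _ (fun n => ?_)
      (fun n => hK.2.1.image _) (isCompact_cyl hK _) fun n => (isCompact_cyl hK _).isClosed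
    rw [hW, List.append_assoc]
    exact cyl_subset hK _ _
  choose Φ hΦ using hpt
  refine le_trans ?_ (dimH_mono (s := range Φ) ?_)
  · refine le_dimH_range (g := Real.ofDigits) (C := (r ^ t)⁻¹) (by positivity) ht ?_ ?_
    · intro ξ η
      by_cases hξη : ξ = η
      · subst hξη; simp [Real.zero_rpow ht.ne']
      have hex : ∃ n, ξ n ≠ η n := Function.ne_iff.1 hξη
      set n := Nat.find hex
      have hn : ξ n ≠ η n := Nat.find_spec hex
      have hlt : ∀ i < n, ξ i = η i := fun i hi => not_not.1 (Nat.find_min hex hi)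
      have key : ∀ ζ, ∃ z ∈ K, S.wmap (W ζ n) (S.wmap (γ (ζ n)) z) = Φ ζ := by
        intro ζ
        obtain ⟨z, hz, h⟩ := mem_iInter.1 (hΦ ζ) (n + 1)
        rw [hW, wmap_append, wmap_append] at h
        exact ⟨_, wmap_mem hK _ hz, h⟩
      obtain ⟨z, hz, h1⟩ := key ξ
      obtain ⟨z', hz', h2⟩ := key η
      rw [← hWcongr ξ η n hlt] at h2
      have h3 := hWlow ξ n _ (wmap_mem hK (γ (ξ n)) hz) _ (wmap_mem hK (γ (η n)) hz')
      rw [h1, h2] at h3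
      have h4 := hγsep _ _ hn z hz z' hz'
      have hLn := (hLpos n).1
      have h5 : L n * r ≤ dist (Φ ξ) (Φ η) :=
        (mul_le_mul_of_nonneg_left h4 hLn.le).trans h3
      have h6 := Real.rpow_le_rpow (by positivity) h5 ht.le
      rw [Real.mul_rpow hLn.le hr.le] at h6
      refine (Real.abs_ofDigits_sub_ofDigits_le hlt).trans ((hLt n).trans ?_)
      rw [← div_eq_inv_mul, le_div_iff₀ (by positivity)]
      exact h6
    · intro c hc
      obtain ⟨ξ, -, h⟩ := Real.ofDigits_SurjOn hN hc
      exact ⟨ξ, h⟩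
  · rintro _ ⟨ξ, rfl⟩
    refine mem_iInter.2 fun k => ?_
    obtain ⟨n, hn, hP⟩ := hLinf k
    refine mem_iUnion₂.2 ⟨W ξ n ++ γ (ξ n), ?_, ?_⟩
    · have := hWlen ξ n
      rw [List.length_append]
      omega
    · have h1 : LowerLip S K (W ξ n ++ γ (ξ n)) (l * L n) := by
        rw [mul_comm]
        exact (hWlow ξ n).append hK (hLpos n).1.le (hγlow (ξ n))
      have h2 := mem_iInter.1 (hΦ ξ) (n + 1)
      rw [hW] at h2
      simp only [ext, if_pos hP] at h2
      exact (hv _ n h1).2 h2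

end Cantor

/-! ### The upper bound -/

section Upper

variable {d m : ℕ} {S : C1IFS d m} {K : Set (Euc d)} {proj : (ℕ → Fin m) → Euc d}

/-- At exponent `0` every cylinder contributes `1`, so the pressure is `log m > 0`. -/
lemma s₀_pos (hm : 2 ≤ m) {s₀ : ℝ} (hs₀ : 0 ≤ s₀) (hP : HasPressure S K s₀ 0) : 0 < s₀ := by
  rcases hs₀.eq_or_lt with h | h
  · exfalso
    subst h
    have h1 : Tendsto (fun _ : ℕ => Real.log m) atTop (𝓝 0) := by
      refine hP.congr' ?_
      filter_upwards [eventually_gt_atTop 0] with k hk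
      have hk' : (k : ℝ) ≠ 0 := by positivity
      simp [Real.log_pow]
      field_simp
    have h2 := tendsto_nhds_unique h1 tendsto_const_nhds
    have h3 : 0 < Real.log m := Real.log_pos (by exact_mod_cast hm)
    linarith
  · exact h

/-- Past the exponent `s₀`, the sums over words of fixed length decay geometrically. -/
lemma sum_diam_le (hm : 2 ≤ m) (hK : IsAttractor S K)
    (hcod : ∀ x, ∀ z ∈ K, Tendsto (fun k => S.wmap (wpre x k) z) atTop (𝓝 (proj x)))
    {s₀ q : ℝ} (hs₀ : 0 ≤ s₀) (hP : HasPressure S K s₀ 0) (hq : s₀ < q) :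
    ∃ b, 0 < b ∧ b < 1 ∧ ∃ D > 0, ∀ᶠ k : ℕ in atTop,
      ∑ w : Fin k → Fin m, diam (S.wmap (List.ofFn w) '' K) ^ q ≤ D * b ^ k := by
  obtain ⟨C, hC, a, ha0, ha1, hCa⟩ := exp_decay hm hK hcod
  have hθ : 0 < q - s₀ := by linarith
  have haθ : a ^ (q - s₀) < 1 := Real.rpow_lt_one ha0.le ha1 hθ
  have haθ0 : 0 < a ^ (q - s₀) := Real.rpow_pos_of_pos ha0 _
  -- the geometric rate is halved on the logarithmic scale to absorb the subexponential error
  set ε : ℝ := -Real.log (a ^ (q - s₀)) / 2 with hε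
  have hεp : 0 < ε := by
    have := Real.log_neg haθ0 haθ
    simp only [hε]; linarith
  have hb : Real.exp ε * a ^ (q - s₀) = Real.exp (-ε) := by
    rw [show a ^ (q - s₀) = Real.exp (-(2 * ε)) by
      rw [show -(2 * ε) = Real.log (a ^ (q - s₀)) by rw [hε]; ring, Real.exp_log haθ0],
      ← Real.exp_add]
    congr 1
    ring
  refine ⟨Real.exp (-ε), Real.exp_pos _, by rw [Real.exp_lt_one_iff]; linarith, C ^ (q - s₀),
    Real.rpow_pos_of_pos hC _, ?_⟩
  have hev := hP.eventually (gt_mem_nhds hεp)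
  filter_upwards [hev, eventually_gt_atTop 0] with k hk hk0
  have hk0' : (0 : ℝ) < k := by exact_mod_cast hk0
  have hsum0 : 0 ≤ ∑ w : Fin k → Fin m, diam (S.wmap (List.ofFn w) '' K) ^ s₀ :=
    Finset.sum_nonneg fun w _ => Real.rpow_nonneg diam_nonneg _
  have hsum : ∑ w : Fin k → Fin m, diam (S.wmap (List.ofFn w) '' K) ^ s₀ ≤ Real.exp (ε * k) := by
    rcases hsum0.eq_or_lt with h | h
    · rw [← h]; positivity
    · rw [← Real.log_le_iff_le_exp h]
      rw [div_lt_iff₀ hk0'] at hk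
      exact hk.le
  calc ∑ w : Fin k → Fin m, diam (S.wmap (List.ofFn w) '' K) ^ q
      ≤ ∑ w : Fin k → Fin m, (C * a ^ k) ^ (q - s₀) * diam (S.wmap (List.ofFn w) '' K) ^ s₀ := by
        refine Finset.sum_le_sum fun w _ => ?_
        rcases (diam_nonneg (s := S.wmap (List.ofFn w) '' K)).eq_or_lt with h | h
        · rw [← h, Real.zero_rpow (by linarith)]
          positivity
        · have h1 := hCa (List.ofFn w)
          rw [List.length_ofFn] at h1
          have h2 := Real.rpow_le_rpow h.le h1 hθ.le
          calc diam (S.wmap (List.ofFn w) '' K) ^ q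
              = diam (S.wmap (List.ofFn w) '' K) ^ (q - s₀) *
                diam (S.wmap (List.ofFn w) '' K) ^ s₀ := by
                rw [← Real.rpow_add h]; congr 1; ring
            _ ≤ _ := by gcongr
    _ = (C * a ^ k) ^ (q - s₀) * ∑ w : Fin k → Fin m, diam (S.wmap (List.ofFn w) '' K) ^ s₀ := by
        rw [Finset.mul_sum]
    _ ≤ (C * a ^ k) ^ (q - s₀) * Real.exp (ε * k) := by
        gcongr
    _ = C ^ (q - s₀) * Real.exp (-ε) ^ k := by
        rw [Real.mul_rpow hC.le (by positivity), ← hb, mul_pow, ← Real.rpow_natCast a k,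
          ← Real.rpow_mul ha0.le, mul_comm (k : ℝ) (q - s₀), Real.rpow_mul ha0.le,
          Real.rpow_natCast, mul_comm ε, Real.exp_nat_mul]
        ring

/-- The upper bound: the limsup set has dimension at most `t` for every `t > s₀ / δ`, by covering
it with the balls of all words of length at least `n`. -/
lemma upper_bound (hm : 2 ≤ m) (hK : IsAttractor S K)
    (hcod : ∀ x, ∀ z ∈ K, Tendsto (fun k => S.wmap (wpre x k) z) atTop (𝓝 (proj x)))
    {s₀ t δ : ℝ} (hs₀ : 0 < s₀) (hP : HasPressure S K s₀ 0)
    (x₀ : Euc d) (hδ : 1 ≤ δ) (ht : 0 < t) (hts : s₀ < δ * t) :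
    dimH (limsupWords fun w => closedBall (S.wmap w x₀) (diam (S.wmap w '' K) ^ δ)) ≤
      ENNReal.ofReal t := by
  obtain ⟨b, hb0, hb1, D, hD, hsum⟩ := sum_diam_le hm hK hcod hs₀.le hP hts
  obtain ⟨k₀, hk₀⟩ := eventually_atTop.1 hsum
  obtain ⟨C, hC, a, ha0, ha1, hCa⟩ := exp_decay hm hK hcod
  set E : List (Fin m) → Set (Euc d) := fun w =>
    closedBall (S.wmap w x₀) (diam (S.wmap w '' K) ^ δ) with hE
  set ι := Σ k : ℕ, (Fin k → Fin m)
  have hdE : ∀ w, ediam (E w) ≤ ENNReal.ofReal (2 * diam (S.wmap w '' K) ^ δ) := by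
    intro w
    rw [ENNReal.ofReal_mul zero_le_two, ENNReal.ofReal_ofNat]
    refine le_trans (Metric.ediam_mono ?_) (Metric.ediam_closedEBall_le (x := S.wmap w x₀))
    rw [Metric.closedEBall_ofReal (Real.rpow_nonneg diam_nonneg _)]
  set V : ℕ → ι → Set (Euc d) := fun n p => if n + k₀ ≤ p.1 then E (List.ofFn p.2) else ∅ with hV
  have hVd : ∀ n p, ediam (V n p) ≤ ENNReal.ofReal (2 * (C * a ^ n) ^ δ) := by
    intro n p
    simp only [hV]
    split_ifs with h
    · refine (hdE _).trans (ENNReal.ofReal_le_ofReal ?_)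
      have h1 := hCa (List.ofFn p.2)
      rw [List.length_ofFn] at h1
      have h2 : a ^ p.1 ≤ a ^ n := pow_le_pow_of_le_one ha0.le ha1.le (by omega)
      have h3 : diam (S.wmap (List.ofFn p.2) '' K) ≤ C * a ^ n := h1.trans (by gcongr)
      have : (0:ℝ) ≤ δ := by linarith
      gcongr
    · simp
  have hr : Tendsto (fun n : ℕ => ENNReal.ofReal (2 * (C * a ^ n) ^ δ)) atTop (𝓝 0) := by
    have h1 : Tendsto (fun n : ℕ => C * a ^ n) atTop (𝓝 0) := by
      simpa using (tendsto_pow_atTop_nhds_zero_of_lt_one ha0.le ha1).const_mul C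
    have h2 : Tendsto (fun n : ℕ => 2 * (C * a ^ n) ^ δ) atTop (𝓝 0) := by
      have := (h1.rpow_const (p := δ) (Or.inr (by linarith))).const_mul 2
      rwa [Real.zero_rpow (by linarith), mul_zero] at this
    simpa using ENNReal.tendsto_ofReal h2
  have hcov : ∀ n, limsupWords E ⊆ ⋃ p, V n p := by
    intro n z hz
    obtain ⟨w, hw⟩ := mem_iUnion.1 (mem_iInter.1 hz (n + k₀))
    obtain ⟨hwl, hwz⟩ := mem_iUnion.1 hw
    refine mem_iUnion.2 ⟨⟨w.length, w.get⟩, ?_⟩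
    simp only [hV, hwl, if_true, List.ofFn_get]
    exact hwz
  have htot : ∀ n, ∑' p, ediam (V n p) ^ t ≤ ENNReal.ofReal (2 ^ t * (D * (1 - b)⁻¹)) := by
    intro n
    rw [ENNReal.tsum_sigma (fun k g => ediam (V n ⟨k, g⟩) ^ t)]
    have hk : ∀ k, ∑' g : Fin k → Fin m, ediam (V n ⟨k, g⟩) ^ t ≤
        ENNReal.ofReal (2 ^ t * (D * b ^ k)) := by
      intro k
      rw [tsum_fintype]
      by_cases h : n + k₀ ≤ k
      · calc ∑ g : Fin k → Fin m, ediam (V n ⟨k, g⟩) ^ t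
            ≤ ∑ g : Fin k → Fin m,
              ENNReal.ofReal (2 ^ t * diam (S.wmap (List.ofFn g) '' K) ^ (δ * t)) := by
              refine Finset.sum_le_sum fun g _ => ?_
              simp only [hV, h, if_true]
              refine (ENNReal.rpow_le_rpow (hdE _) ht.le).trans ?_
              rw [ENNReal.ofReal_rpow_of_nonneg (by positivity) ht.le,
                Real.mul_rpow zero_le_two (Real.rpow_nonneg diam_nonneg _),
                ← Real.rpow_mul diam_nonneg]
          _ = ENNReal.ofReal (2 ^ t *
                ∑ g : Fin k → Fin m, diam (S.wmap (List.ofFn g) '' K) ^ (δ * t)) := by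
              rw [Finset.mul_sum, ENNReal.ofReal_sum_of_nonneg]
              exact fun g _ => mul_nonneg (by positivity) (Real.rpow_nonneg diam_nonneg _)
          _ ≤ _ := by
              refine ENNReal.ofReal_le_ofReal ?_
              have := hk₀ k (by omega)
              gcongr
      · simp [hV, h, ht]
    refine (ENNReal.tsum_le_tsum hk).trans ?_
    have hg := (hasSum_geometric_of_lt_one hb0.le hb1).mul_left D |>.mul_left (2 ^ t)
    rw [← ENNReal.ofReal_tsum_of_nonneg (fun k => by positivity) hg.summable, hg.tsum_eq]
  refine dimH_le_of_hausdorffMeasure_ne_top (d := t.toNNReal) ?_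
  rw [Real.coe_toNNReal _ ht.le]
  have hH := Measure.hausdorffMeasure_le_liminf_tsum t (limsupWords E)
    (fun n : ℕ => ENNReal.ofReal (2 * (C * a ^ n) ^ δ)) hr V
    (Eventually.of_forall hVd) (Eventually.of_forall hcov)
  refine ne_top_of_le_ne_top (ENNReal.ofReal_ne_top (r := 2 ^ t * (D * (1 - b)⁻¹)))
    (hH.trans ?_)
  refine (liminf_le_liminf (Eventually.of_forall htot)).trans ?_
  simp

end Upper

/-! ### The dimension formula -/

/-- Shrinking target theorem: if `dim_H K = dim(S)` (the conformality dimension,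
i.e. the zero `s₀` of the pressure), then for every `x₀ ∈ K` and every `δ ≥ 1`,
`dim_H (limsup_{w ∈ Λ*} B(f_w(x₀), |f_w(K)|^δ)) = dim_H(K)/δ`. -/
theorem statement2 {d m : ℕ} (hd : 1 ≤ d) (hm : 2 ≤ m)
    (S : C1IFS d m) (K : Set (Euc d)) (hK : IsAttractor S K)
    (hwc : IsWeaklyConformal S K)
    (s₀ : ℝ) (hs₀ : 0 ≤ s₀) (hP : HasPressure S K s₀ 0)
    (hdim : dimH K = ENNReal.ofReal s₀)
    (x₀ : Euc d) (hx₀ : x₀ ∈ K) (δ : ℝ) (hδ : 1 ≤ δ) :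
    dimH (limsupWords (fun w => closedBall (S.wmap w x₀) (diam (S.wmap w '' K) ^ δ)))
      = ENNReal.ofReal (s₀ / δ) := by
  obtain ⟨proj, hwc⟩ := hwc
  have hs := s₀_pos hm hs₀ hP
  have hδ0 : 0 < δ := by linarith
  have hdiam : 0 < diam K := by
    refine diam_nonneg.lt_of_ne' fun h => ?_
    have h1 : K.Subsingleton := fun x hx y hy =>
      dist_le_zero.1 (h ▸ dist_le_diam_of_mem hK.1.isBounded hx hy)
    rw [dimH_subsingleton h1] at hdim
    exact absurd hdim.symm (by simpa using hs)
  refine le_antisymm ?_ ?_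
  · refine ENNReal.le_of_forall_pos_le_add fun ε hε _ => ?_
    have hε' : (0 : ℝ) < ε := hε
    have ht : 0 < s₀ / δ + ε := by positivity
    have hts : s₀ < δ * (s₀ / δ + ε) := by
      have : δ * (s₀ / δ + ε) = s₀ + δ * ε := by field_simp
      nlinarith [mul_pos hδ0 hε']
    refine (upper_bound hm hK hwc.2.1 hs hP x₀ hδ ht hts).trans ?_
    rw [ENNReal.ofReal_add (by positivity) hε'.le, ENNReal.ofReal_coe_nnreal]
  · refine le_of_forall_lt fun c hc => ?_
    obtain ⟨r, hr1, hr2⟩ := ENNReal.lt_iff_exists_nnreal_btwn.1 hc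
    have hr0 : (0 : ℝ) < r := by
      have : (0 : ℝ≥0∞) < r := zero_le.trans_lt hr1
      exact_mod_cast this
    have hrs : (r : ℝ) < s₀ / δ := by
      rw [← ENNReal.ofReal_coe_nnreal] at hr2
      exact (ENNReal.ofReal_lt_ofReal_iff (by positivity)).1 hr2
    have hts : δ * r < s₀ := by
      rw [lt_div_iff₀ hδ0] at hrs
      linarith
    have := lower_bound hd hm hK hwc hdiam hdim hx₀ hδ hr0 hts
    rw [ENNReal.ofReal_coe_nnreal] at this
    exact hr1.trans_le this
end
end

section
/- Let (g_n)_{n≥1} be a sequence of real numbers such that for every ε > 0 there exists a constant M_ε > 0 with g_{n+m} ≤ M_ε + mε + g_n + g_m for all n, m ≥ 1. Then the sequence (g_n/n)_{n≥1} converges in ℝ ∪ {−∞}. -/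
/-!
This is Fekete's argument with an error term. Fix `ε` and its constant `M`. Splitting off blocks of
a fixed length `p` from `n` costs at most `g p + M + p ε` per block, so
`g n ≤ C + n (g p / p + M / p + ε)` with `C` independent of `n` (`exists_linear_bound`), whence
`limsup g n / n ≤ g p / p + M / p + ε`. Choosing `p` large makes `M / p` small, so any value below
which `g p / p` falls infinitely often bounds the limsup (`eventually_div_lt_of_frequently`).
Thus `g n / n` has no upcrossings, and it is bounded above; it therefore converges
unless it is unbounded below, in which case it tends to `-∞`.
-/

open Filter Metric Set MeasureTheory Topology ENNReal NNReal

noncomputable section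

/-- The slope `t` is the average cost of one block of length `p`; the induction removes the last
block. -/
lemma exists_linear_bound (g : ℕ → ℝ) {ε M : ℝ}
    (hM : ∀ n : ℕ, 1 ≤ n → ∀ k : ℕ, 1 ≤ k → g (n + k) ≤ M + (k : ℝ) * ε + g n + g k)
    {p : ℕ} (hp : 1 ≤ p) {t : ℝ} (ht : (p : ℝ) * t = M + p * ε + g p) :
    ∃ C : ℝ, ∀ n : ℕ, 1 ≤ n → g n ≤ C + n * t := by
  refine ⟨∑ r ∈ Finset.range (p + 1), |g r - r * t|, fun n => ?_⟩
  induction n using Nat.strong_induction_on with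
  | _ n ih =>
    intro hn
    by_cases hnp : n ≤ p
    · have h1 := Finset.single_le_sum (f := fun r : ℕ => |g r - r * t|)
        (fun i _ => abs_nonneg _) (Finset.mem_range.2 (Nat.lt_succ_of_le hnp))
      have h2 := le_abs_self (g n - n * t)
      linarith
    · obtain ⟨m, rfl⟩ : ∃ m, n = m + p := ⟨n - p, by omega⟩
      have h1 := ih m (by omega) (by omega)
      have h2 := hM m (by omega) p hp
      push_cast
      linarith

/-- The bound `limsup g n / n ≤ g p / p + M / p + ε`. -/
lemma eventually_div_lt (g : ℕ → ℝ) {ε M : ℝ}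
    (hM : ∀ n : ℕ, 1 ≤ n → ∀ k : ℕ, 1 ≤ k → g (n + k) ≤ M + (k : ℝ) * ε + g n + g k)
    {p : ℕ} (hp : 1 ≤ p) {c : ℝ} (hc : g p / p + M / p + ε < c) :
    ∀ᶠ n : ℕ in atTop, g n / n < c := by
  have hp0 : (p : ℝ) ≠ 0 := by positivity
  obtain ⟨C, hC⟩ := exists_linear_bound g hM hp (t := g p / p + M / p + ε)
    (by field_simp; ring)
  have hlim := tendsto_const_div_atTop_nhds_zero_nat C
  filter_upwards [hlim.eventually_lt_const (sub_pos.2 hc), eventually_ge_atTop 1] with n h1 h2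
  have hn : (0 : ℝ) < n := by exact_mod_cast h2
  calc g n / n ≤ (C + n * (g p / p + M / p + ε)) / n := by
        gcongr
        exact hC n h2
    _ = C / n + (g p / p + M / p + ε) := by field_simp
    _ < c := by linarith

lemma eventually_div_lt_of_frequently (g : ℕ → ℝ)
    (h : ∀ ε : ℝ, 0 < ε → ∃ M : ℝ, 0 < M ∧
      ∀ n : ℕ, 1 ≤ n → ∀ k : ℕ, 1 ≤ k → g (n + k) ≤ M + (k : ℝ) * ε + g n + g k)
    {a b : ℝ} (hab : a < b) (ha : ∃ᶠ n : ℕ in atTop, g n / n < a) :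
    ∀ᶠ n : ℕ in atTop, g n / n < b := by
  obtain ⟨M, -, hM⟩ := h ((b - a) / 2) (by linarith)
  have hlim := (tendsto_const_div_atTop_nhds_zero_nat M).eventually_lt_const
    (show 0 < (b - a) / 2 by linarith)
  obtain ⟨p, h1, h2, h3⟩ := (ha.and_eventually (hlim.and (eventually_ge_atTop 1))).exists
  exact eventually_div_lt g hM h3 (by linarith)

/-- If a real sequence `(g_n)` satisfies: for every `ε > 0` there is `M_ε > 0` with
`g_{n+m} ≤ M_ε + m ε + g_n + g_m` for all `n, m ≥ 1`, then `(g_n / n)` converges in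
`ℝ ∪ {-∞}`. -/
theorem statement4 (g : ℕ → ℝ)
    (h : ∀ ε : ℝ, 0 < ε → ∃ M : ℝ, 0 < M ∧
      ∀ n : ℕ, 1 ≤ n → ∀ k : ℕ, 1 ≤ k → g (n + k) ≤ M + (k : ℝ) * ε + g n + g k) :
    (∃ L : ℝ, Tendsto (fun n : ℕ => g n / n) atTop (𝓝 L)) ∨
      Tendsto (fun n : ℕ => g n / n) atTop atBot := by
  by_cases hbot : ∀ c : ℝ, ∃ᶠ n : ℕ in atTop, g n / n < c
  · right
    refine tendsto_atBot.2 fun b => ?_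
    exact (eventually_div_lt_of_frequently g h (sub_one_lt b) (hbot _)).mono fun n hn => hn.le
  · left
    push Not at hbot
    obtain ⟨c, hc⟩ := hbot
    obtain ⟨M, -, hM⟩ := h 1 one_pos
    have hbdd : IsBoundedUnder (· ≤ ·) atTop fun n : ℕ => g n / n :=
      ⟨_, eventually_map.2 ((eventually_div_lt g hM le_rfl (lt_add_one _)).mono
        fun n hn => hn.le)⟩
    have hbdd' : IsBoundedUnder (· ≥ ·) atTop fun n : ℕ => g n / n :=
      ⟨c, eventually_map.2 hc⟩
    refine tendsto_of_no_upcrossings dense_univ ?_ hbdd hbdd'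
    rintro a - b - hab ⟨ha, hb⟩
    exact hb ((eventually_div_lt_of_frequently g h hab ha).mono fun n hn => hn.not_gt)
end
end
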